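/- arXiv:math/0501306 — 3 statements merged into one kernel-verified Lean document; each statement's English description precedes it below -/
import Mathlib

section
/- Let (p, q) and (r, s) be pairs of positive integers with 2p ≤ q and 2r ≤ s, and suppose p/q = r/s. Write this common value in lowest terms with denominator k; then k divides both q and s. If s/k = q/k or s/k <_s q/k in the Sharkovsky ordering, then (p, q) forces (r, s): every continuous map f : I → I of a closed interval I having a cycle with over-rotation pair (p, q) also has a cycle with over-rotation pair (r, s). -/
open Function

/-- The number of sign changes of `f y - y` as `y` runs along the cyclic sequence
`x, f x, …, f^[q-1] x, f^[q] x (= x)`. -/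
noncomputable def overCount (f : ℝ → ℝ) (x : ℝ) (q : ℕ) : ℕ :=
  ((Finset.range q).filter fun i =>
    (f (f^[i] x) - f^[i] x) * (f (f^[i + 1] x) - f^[i + 1] x) < 0).card

/-- `f` has a cycle in `I` with over-rotation pair `(p, q)`. -/
def HasOverPair (f : ℝ → ℝ) (I : Set ℝ) (p q : ℕ) : Prop :=
  ∃ x ∈ I, minimalPeriod f x = q ∧ overCount f x q = 2 * p

/-- The over-rotation pair `(p, q)` forces the over-rotation pair `(r, s)`: every
continuous map of a closed interval into itself having a cycle with over-rotation pair
`(p, q)` also has a cycle with over-rotation pair `(r, s)`. -/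
def OrpForces (p q r s : ℕ) : Prop :=
  ∀ a b : ℝ, a ≤ b → ∀ f : ℝ → ℝ, ContinuousOn f (Set.Icc a b) →
    Set.MapsTo f (Set.Icc a b) (Set.Icc a b) →
    HasOverPair f (Set.Icc a b) p q → HasOverPair f (Set.Icc a b) r s

/-- The odd part of a natural number: `n = 2^k * oddPart n` with `oddPart n` odd (for `n ≠ 0`). -/
def oddPart (n : ℕ) : ℕ := n / 2 ^ (n.factorization 2)

/-- The Sharkovsky ordering `a <ₛ b`. -/
def SharkLt (a b : ℕ) : Prop :=
  (oddPart a = 1 ∧ oddPart b = 1 ∧ a < b) ∨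
  (oddPart a = 1 ∧ oddPart b ≠ 1) ∨
  (oddPart a ≠ 1 ∧ oddPart b ≠ 1 ∧
    (b.factorization 2 < a.factorization 2 ∨
      (a.factorization 2 = b.factorization 2 ∧ oddPart b < oddPart a)))

/-!
Write `p / q = m / k` in lowest terms and `(p, q) = (m * n, k * n)`, `(r, s) = (m * l, k * l)`.

Suppose first that on the cycle `f y - y` changes sign exactly when the orbit crosses a fixed point
`c`. Consider the map which is `f^[k]` at the points whose first `k` steps cross `c` exactly `2 * m`
times, and which sends all other points to `c`. It is continuous, because the number of crossings
can only jump where the orbit hits `c`, and its cycles of period `l` off `c` are cycles of `f` of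
period `k * l` with `2 * m * l` crossings, because `m` and `k` are coprime. A cycle lemma applied to
the excess of crossings over the mean rate `2 * m / k` yields a finite piece of the given cycle,
lying on one side of `c`, which this map repels from `c`. Either the piece contains a cycle of
period `n`, and Sharkovsky's theorem gives period `l`, or some of its points are sent to `c`, and
the resulting horseshoe has cycles of all periods.

If the sign of `f y - y` does not separate the cycle along `c`, orbits can cross `c` and wait near a
second fixed point for as long as desired; this again gives a horseshoe with all periods.
-/

open Set

section Covering

theorem exists_itinerary {α : Type*} {f : α → α} {K : ℕ → Set α} {l : ℕ}
    (hK : ∀ i < l, SurjOn f (K i) (K (i + 1))) {y : α} (hy : y ∈ K l) :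
    ∃ x, (∀ i ≤ l, f^[i] x ∈ K i) ∧ f^[l] x = y := by
  induction l generalizing K with
  | zero => exact ⟨y, fun i hi => by obtain rfl := Nat.le_zero.1 hi; exact hy, rfl⟩
  | succ l ih =>
    obtain ⟨z, hz, hzy⟩ := ih (K := fun i => K (i + 1)) (fun i hi => hK _ (by omega)) hy
    obtain ⟨x, hx, rfl⟩ := hK 0 (Nat.succ_pos l) (hz 0 (Nat.zero_le l))
    refine ⟨x, fun i hi => ?_, hzy⟩
    cases i with
    | zero => exact hx
    | succ i => exact hz i (by omega)

variable {α β : Type*} [ConditionallyCompleteLinearOrder α] [TopologicalSpace α] [OrderTopology α]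
  [DenselyOrdered α] [LinearOrder β] [TopologicalSpace β] [OrderClosedTopology β]

theorem mem_uIcc_or_mem_uIcc_or_mem_uIcc {γ : Type*} [LinearOrder γ] (x y z : γ) :
    x ∈ uIcc z y ∨ y ∈ uIcc x z ∨ z ∈ uIcc x y := by
  simp only [mem_uIcc]
  grind

theorem exists_mapsTo_uIcc {f : α → β} {x y : α} (hf : ContinuousOn f (uIcc x y)) :
    ∃ s ∈ uIcc x y, ∃ t ∈ uIcc x y, f s = f x ∧ f t = f y ∧
      MapsTo f (uIcc s t) (uIcc (f x) (f y)) := by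
  wlog hxy : x ≤ y generalizing x y
  · obtain ⟨s, hs, t, ht, hsx, hty, hm⟩ := this (uIcc_comm x y ▸ hf) (le_of_not_ge hxy)
    rw [uIcc_comm y x] at hs ht
    rw [uIcc_comm s t, uIcc_comm (f y)] at hm
    exact ⟨t, ht, s, hs, hty, hsx, hm⟩
  rw [uIcc_of_le hxy] at hf ⊢
  -- `t` is the first point over `f y`, and `s` the last point before `t` over `f x`.
  have compact_fiber {u v : α} (hv : v ≤ y) (hu : x ≤ u) (b : β) :
      IsCompact (Icc u v ∩ f ⁻¹' {b}) :=
    isCompact_Icc.of_isClosed_subset ((hf.mono (Icc_subset_Icc hu hv)).preimage_isClosed_of_isClosed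
      isClosed_Icc isClosed_singleton) inter_subset_left
  obtain ⟨t, ⟨⟨hxt, hty⟩, hft : f t = f y⟩, htmin⟩ :=
    (compact_fiber le_rfl le_rfl (f y)).exists_isLeast ⟨y, right_mem_Icc.2 hxy, rfl⟩
  obtain ⟨s, ⟨⟨hxs, hst⟩, hfs : f s = f x⟩, hsmax⟩ :=
    (compact_fiber hty le_rfl (f x)).exists_isGreatest ⟨x, left_mem_Icc.2 hxt, rfl⟩
  refine ⟨s, ⟨hxs, hst.trans hty⟩, t, ⟨hxt, hty⟩, hfs, hft, fun z hz => ?_⟩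
  obtain ⟨hsz, hzt⟩ := uIcc_of_le hst ▸ hz
  have ivt {u v : α} (hsu : s ≤ u) (huv : u ≤ v) (hvt : v ≤ t) :=
    intermediate_value_uIcc (hf.mono (uIcc_of_le huv ▸ Icc_subset_Icc (hxs.trans hsu)
      (hvt.trans hty)))
  have hx_of_between (h : f x ∈ uIcc (f z) (f y)) : f z = f x := by
    obtain ⟨w, hw, hwx⟩ := ivt hsz hzt le_rfl (hft.symm ▸ h)
    rw [uIcc_of_le hzt] at hw
    have hws : w ≤ s := hsmax ⟨⟨hxs.trans (hsz.trans hw.1), hw.2⟩, hwx⟩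
    rw [le_antisymm (hw.1.trans hws) hsz, hfs]
  have hy_of_between (h : f y ∈ uIcc (f x) (f z)) : f z = f y := by
    obtain ⟨w, hw, hwy⟩ := ivt le_rfl hsz hzt (hfs.symm ▸ h)
    rw [uIcc_of_le hsz] at hw
    have htw : t ≤ w := htmin ⟨⟨hxs.trans hw.1, hw.2.trans (hzt.trans hty)⟩, hwy⟩
    rw [le_antisymm hzt (htw.trans hw.2), hft]
  rcases mem_uIcc_or_mem_uIcc_or_mem_uIcc (f x) (f y) (f z) with h | h | h
  · exact hx_of_between h ▸ left_mem_uIcc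
  · exact hy_of_between h ▸ right_mem_uIcc
  · exact h

theorem exists_uIcc_itinerary {f : α → α} {a b : ℕ → α} {l : ℕ}
    (hf : ∀ i < l, ContinuousOn f (uIcc (a i) (b i)))
    (hs : ∀ i < l, SurjOn f (uIcc (a i) (b i)) (uIcc (a (i + 1)) (b (i + 1)))) :
    ∃ s t, (∀ x ∈ uIcc s t, ∀ i ≤ l, f^[i] x ∈ uIcc (a i) (b i)) ∧
      ContinuousOn f^[l] (uIcc s t) ∧ f^[l] s = a l ∧ f^[l] t = b l := by
  induction l generalizing a b with
  | zero =>
    refine ⟨a 0, b 0, fun x hx i hi => ?_, continuousOn_id, rfl, rfl⟩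
    obtain rfl := Nat.le_zero.1 hi
    exact hx
  | succ l ih =>
    obtain ⟨s', t', hst', hcont, hs', ht'⟩ := ih (a := fun i => a (i + 1)) (b := fun i => b (i + 1))
      (fun i hi => hf _ (by omega)) (fun i hi => hs _ (by omega))
    obtain ⟨x, hx, rfl⟩ := hs 0 l.succ_pos (hst' s' left_mem_uIcc 0 l.zero_le)
    obtain ⟨y, hy, rfl⟩ := hs 0 l.succ_pos (hst' t' right_mem_uIcc 0 l.zero_le)
    have hxy : uIcc x y ⊆ uIcc (a 0) (b 0) := uIcc_subset_uIcc hx hy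
    obtain ⟨s, hsxy, t, htxy, hsx, hty, hm⟩ := exists_mapsTo_uIcc ((hf 0 l.succ_pos).mono hxy)
    have hst : uIcc s t ⊆ uIcc (a 0) (b 0) := (uIcc_subset_uIcc hsxy htxy).trans hxy
    refine ⟨s, t, fun z hz i hi => ?_, ?_, ?_, ?_⟩
    · cases i with
      | zero => exact hst hz
      | succ i => exact hst' (f z) (hm hz) i (by omega)
    · exact hcont.comp ((hf 0 l.succ_pos).mono hst) hm
    · rwa [iterate_succ_apply, hsx]
    · rwa [iterate_succ_apply, hty]

theorem exists_isPeriodicPt_itinerary {f : α → α} {a b : ℕ → α} {l : ℕ}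
    (hf : ∀ i < l, ContinuousOn f (uIcc (a i) (b i)))
    (hs : ∀ i < l, SurjOn f (uIcc (a i) (b i)) (uIcc (a (i + 1)) (b (i + 1))))
    (hl : uIcc (a 0) (b 0) ⊆ uIcc (a l) (b l)) :
    ∃ y, (∀ i ≤ l, f^[i] y ∈ uIcc (a i) (b i)) ∧ IsPeriodicPt f l y := by
  obtain ⟨s, t, hst, hcont, hsa, htb⟩ := exists_uIcc_itinerary hf hs
  have hsl := hl (hst s left_mem_uIcc 0 l.zero_le)
  have htl := hl (hst t right_mem_uIcc 0 l.zero_le)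
  rw [← hsa, ← htb] at hsl htl
  obtain ⟨y, hy, hfix⟩ : ∃ y ∈ uIcc s t, IsFixedPt f^[l] y := by
    rcases le_total (f^[l] s) (f^[l] t) with h | h
    · rw [uIcc_of_le h] at hsl htl
      rw [uIcc_comm] at hcont ⊢
      exact exists_mem_uIcc_isFixedPt hcont htl.2 hsl.1
    · rw [uIcc_of_ge h] at hsl htl
      exact exists_mem_uIcc_isFixedPt hcont hsl.2 htl.1
  exact ⟨y, hst y hy, hfix⟩

theorem surjOn_uIcc_of_isFixedPt {f : α → α} {x y c : α} (hf : ContinuousOn f (uIcc x c))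
    (hc : IsFixedPt f c) (hy : y ∈ uIcc (f x) c) : SurjOn f (uIcc x c) (uIcc y c) :=
  (uIcc_subset_uIcc_right hy).trans (by simpa only [hc.eq] using intermediate_value_uIcc hf)

end Covering

section Crossings

variable {α : Type*} [LinearOrder α]

/-- The number of times the finite sequence `w 0, …, w n` changes sides with respect to `c`. -/
def crossings (c : α) (w : ℕ → α) (n : ℕ) : ℕ :=
  ((Finset.range n).filter fun i => ¬(w i < c ↔ w (i + 1) < c)).card

theorem crossings_zero (c : α) (w : ℕ → α) : crossings c w 0 = 0 := rfl

theorem crossings_succ (c : α) (w : ℕ → α) (n : ℕ) :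
    crossings c w (n + 1) = crossings c w n + if (w n < c ↔ w (n + 1) < c) then 0 else 1 := by
  simp only [crossings, Finset.card_filter, Finset.sum_range_succ, ite_not]

theorem crossings_add (c : α) (w : ℕ → α) (m n : ℕ) :
    crossings c w (m + n) = crossings c w m + crossings c (fun i => w (m + i)) n := by
  simp only [crossings, Finset.card_filter, Finset.sum_range_add, add_assoc]

theorem crossings_congr {c : α} {w w' : ℕ → α} {n : ℕ} (h : ∀ i ≤ n, w i < c ↔ w' i < c) :
    crossings c w n = crossings c w' n := by
  refine congrArg Finset.card (Finset.filter_congr fun i hi => ?_)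
  have hi := Finset.mem_range.1 hi
  rw [h i hi.le, h (i + 1) hi]

theorem even_crossings_iff (c : α) (w : ℕ → α) (n : ℕ) :
    Even (crossings c w n) ↔ (w 0 < c ↔ w n < c) := by
  induction n with
  | zero => simp [crossings_zero]
  | succ n ih => rw [crossings_succ]; split_ifs <;> grind

theorem crossings_orbit_add (f : α → α) (c x : α) (m n : ℕ) :
    crossings c (f^[·] x) (m + n) = crossings c (f^[·] x) m + crossings c (f^[·] (f^[m] x)) n := by
  rw [crossings_add]
  simp only [← iterate_add_apply, add_comm m]

theorem crossings_orbit_mul {f : α → α} {x : α} {d : ℕ} (hx : IsPeriodicPt f d x) (c : α) (n : ℕ) :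
    crossings c (f^[·] x) (d * n) = crossings c (f^[·] x) d * n := by
  induction n with
  | zero => rfl
  | succ n ih => rw [Nat.mul_succ, crossings_orbit_add, ih, (hx.mul_const n).eq, Nat.mul_succ]

end Crossings

section FixedPoint

variable {α : Type*} {f : α → α} {c x : α}

theorem iterate_ne_of_le (hc : IsFixedPt f c) {i j : ℕ} (hij : i ≤ j) (hx : f^[j] x ≠ c) :
    f^[i] x ≠ c := by
  rintro hi
  rw [← Nat.sub_add_cancel hij, iterate_add_apply, hi] at hx
  exact hx (hc.iterate _)

theorem iterate_ne_of_mem_periodicPts (hc : IsFixedPt f c) (hx : x ∈ periodicPts f) (hxc : x ≠ c)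
    (i : ℕ) : f^[i] x ≠ c := by
  obtain ⟨n, hn, hper⟩ := hx
  exact iterate_ne_of_le hc (Nat.le_mul_of_pos_left i hn) (by rwa [(hper.mul_const i).eq])

end FixedPoint

section ReturnMap

variable {α : Type*} [LinearOrder α] {f : α → α} {c x : α} {J : Set α} {k m μ l : ℕ}

/-- The power `f^[k]`, collapsed to `c` at the points whose first `k` steps do not cross `c` exactly
`μ` times. When `c` is a fixed point of `f` this map is still continuous, and the cycles that avoid
`c` are the cycles of `f` with a prescribed crossing rate. -/
def returnMap (f : α → α) (c : α) (k μ : ℕ) (x : α) : α :=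
  if crossings c (f^[·] x) k = μ then f^[k] x else c

theorem returnMap_of_crossings_eq (h : crossings c (f^[·] x) k = μ) :
    returnMap f c k μ x = f^[k] x := if_pos h

theorem returnMap_of_crossings_ne (h : crossings c (f^[·] x) k ≠ μ) :
    returnMap f c k μ x = c := if_neg h

theorem crossings_eq_of_returnMap_ne (h : returnMap f c k μ x ≠ c) :
    crossings c (f^[·] x) k = μ :=
  of_not_not fun hne => h (returnMap_of_crossings_ne hne)

theorem isFixedPt_returnMap (hc : IsFixedPt f c) : IsFixedPt (returnMap f c k μ) c := by
  rw [IsFixedPt, returnMap, (hc.iterate k).eq, ite_self]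

theorem mapsTo_returnMap (hf : MapsTo f J J) (hc : c ∈ J) : MapsTo (returnMap f c k μ) J J :=
  fun x hx => by
    rw [returnMap]
    split_ifs
    exacts [hf.iterate k hx, hc]

theorem iterate_returnMap_of_ne (hc : IsFixedPt f c) {a : ℕ}
    (h : (returnMap f c k μ)^[a] x ≠ c) :
    (returnMap f c k μ)^[a] x = f^[k * a] x ∧ crossings c (f^[·] x) (k * a) = μ * a := by
  induction a with
  | zero => exact ⟨rfl, rfl⟩
  | succ a ih =>
    obtain ⟨hiter, hcross⟩ := ih (iterate_ne_of_le (isFixedPt_returnMap hc) a.le_succ h)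
    rw [iterate_succ_apply', hiter] at h
    have hstep := crossings_eq_of_returnMap_ne h
    refine ⟨?_, ?_⟩
    · rw [iterate_succ_apply', hiter, returnMap_of_crossings_eq hstep, Nat.mul_succ, add_comm,
        iterate_add_apply]
    · rw [Nat.mul_succ, crossings_orbit_add, hcross, hstep, Nat.mul_succ]

theorem minimalPeriod_returnMap (hc : IsFixedPt f c)
    (hne : ∀ a, (returnMap f c k μ)^[a] x ≠ c) :
    minimalPeriod (returnMap f c k μ) x = minimalPeriod f^[k] x := by
  refine minimalPeriod_eq_minimalPeriod_iff.2 fun a => ?_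
  rw [IsPeriodicPt, IsPeriodicPt, IsFixedPt, IsFixedPt, (iterate_returnMap_of_ne hc (hne a)).1,
    iterate_mul]

theorem minimalPeriod_of_minimalPeriod_returnMap (hc : IsFixedPt f c) (hmk : m.Coprime k)
    (hx : x ≠ c) (hper : minimalPeriod (returnMap f c k (2 * m)) x = l) (hl : 0 < l) :
    minimalPeriod f x = k * l ∧ crossings c (f^[·] x) (k * l) = 2 * m * l := by
  have hT : IsPeriodicPt (returnMap f c k (2 * m)) l x := hper ▸ isPeriodicPt_minimalPeriod _ x
  have horbit (a : ℕ) := iterate_returnMap_of_ne hc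
    (iterate_ne_of_mem_periodicPts (isFixedPt_returnMap hc) ⟨l, hl, hT⟩ hx a)
  have hf : IsPeriodicPt f (k * l) x := (horbit l).1.symm.trans hT
  refine ⟨Nat.dvd_antisymm hf.minimalPeriod_dvd ?_, (horbit l).2⟩
  set d := minimalPeriod f x
  obtain ⟨N, hN⟩ : d ∣ k * l := hf.minimalPeriod_dvd
  obtain ⟨e, he⟩ : Even (crossings c (f^[·] x) d) :=
    (even_crossings_iff _ _ _).2 (by rw [iterate_minimalPeriod, iterate_zero_apply])
  have hcross : 2 * m * l = (e + e) * N := by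
    rw [← (horbit l).2, hN, crossings_orbit_mul (isPeriodicPt_minimalPeriod f x), he]
  have hml : m * l = e * N := by linarith
  have hdm : d * m = k * e :=
    Nat.eq_of_mul_eq_mul_right hl (by linear_combination d * hml - e * hN)
  obtain ⟨j, hj⟩ : k ∣ d := hmk.symm.dvd_of_dvd_mul_right ⟨e, hdm⟩
  have hTj : IsPeriodicPt (returnMap f c k (2 * m)) j x := by
    rw [IsPeriodicPt, IsFixedPt, (horbit j).1, ← hj]
    exact iterate_minimalPeriod
  exact hj ▸ Nat.mul_dvd_mul_left k (hper ▸ hTj.minimalPeriod_dvd)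

theorem continuousOn_returnMap [TopologicalSpace α] [OrderClosedTopology α]
    (hf : ContinuousOn f J) (hJ : MapsTo f J J) (hc : IsFixedPt f c) :
    ContinuousOn (returnMap f c k μ) J := by
  intro x hx
  have hiter (i : ℕ) : ContinuousWithinAt f^[i] J x := hf.iterate hJ i x hx
  by_cases hk : f^[k] x = c
  · have hlim := (hiter k).tendsto
    have hval : returnMap f c k μ x = c := by rw [returnMap, hk, ite_self]
    rw [hk] at hlim
    rw [ContinuousWithinAt, hval]
    exact hlim.if' tendsto_const_nhds
  have hsides : ∀ᶠ y in nhdsWithin x J, ∀ i ≤ k, f^[i] y < c ↔ f^[i] x < c := by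
    refine (Set.finite_Iic k).eventually_all.2 fun i hi => ?_
    rcases (iterate_ne_of_le hc hi hk).lt_or_gt with h | h
    · filter_upwards [(hiter i).eventually_lt_const h] with y hy
      exact iff_of_true hy h
    · filter_upwards [(hiter i).eventually_const_lt h] with y hy
      exact iff_of_false hy.not_gt h.not_gt
  have heq : returnMap f c k μ =ᶠ[nhdsWithin x J]
      fun y => if crossings c (f^[·] x) k = μ then f^[k] y else c := by
    filter_upwards [hsides] with y hy
    rw [returnMap, crossings_congr hy]
  refine ContinuousWithinAt.congr_of_eventuallyEq ?_ heq rfl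
  split_ifs
  exacts [hiter k, continuousWithinAt_const]

end ReturnMap

section Repelling

section Order

variable {α : Type*} [LinearOrder α] {c p q x y z : α} {S : Set α}

theorem mem_uIcc_or_mem_uIcc_of_lt_iff_lt (h : p < c ↔ q < c) : p ∈ uIcc q c ∨ q ∈ uIcc p c := by
  simp only [mem_uIcc]
  grind

theorem lt_iff_lt_of_mem_uIcc (h : p ∈ uIcc q c) (hp : p ≠ c) : p < c ↔ q < c := by
  rw [mem_uIcc] at h
  grind

theorem eq_of_mem_uIcc_of_mem_uIcc_of_mem_uIcc (hz : z ∈ uIcc x c) (hxz : y ∈ uIcc x z)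
    (hzc : y ∈ uIcc z c) : y = z := by
  rw [mem_uIcc] at hz hxz hzc
  grind

theorem exists_nearest (hS : S.Finite) (hne : S.Nonempty)
    (hside : ∀ p ∈ S, ∀ q ∈ S, (p < c ↔ q < c)) : ∃ w ∈ S, ∀ p ∈ S, w ∈ uIcc p c := by
  obtain ⟨p₀, hp₀⟩ := hne
  obtain ⟨u, huS, hu⟩ := exists_max_image S id hS ⟨p₀, hp₀⟩
  obtain ⟨v, hvS, hv⟩ := exists_min_image S id hS ⟨p₀, hp₀⟩
  by_cases h : p₀ < c
  · exact ⟨u, huS, fun p hp => mem_uIcc_of_le (hu p hp) ((hside p₀ hp₀ u huS).1 h).le⟩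
  · exact ⟨v, hvS, fun p hp => mem_uIcc_of_ge (not_lt.1 (mt (hside p₀ hp₀ v hvS).2 h)) (hv p hp)⟩

theorem exists_farthest (hS : S.Finite) (hne : S.Nonempty)
    (hside : ∀ p ∈ S, ∀ q ∈ S, (p < c ↔ q < c)) : ∃ w ∈ S, ∀ p ∈ S, p ∈ uIcc w c := by
  obtain ⟨p₀, hp₀⟩ := hne
  obtain ⟨u, huS, hu⟩ := exists_max_image S id hS ⟨p₀, hp₀⟩
  obtain ⟨v, hvS, hv⟩ := exists_min_image S id hS ⟨p₀, hp₀⟩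
  by_cases h : p₀ < c
  · exact ⟨v, hvS, fun p hp => mem_uIcc_of_le (hv p hp) ((hside p₀ hp₀ p hp).1 h).le⟩
  · exact ⟨u, huS, fun p hp => mem_uIcc_of_ge (not_lt.1 (mt (hside p₀ hp₀ p hp).2 h)) (hu p hp)⟩

end Order

theorem minimalPeriod_eq_of_forall_lt {α : Type*} {f : α → α} {x : α} {l : ℕ} (hl : 0 < l)
    (hper : IsPeriodicPt f l x) (hlt : ∀ d < l, 0 < d → ¬IsPeriodicPt f d x) :
    minimalPeriod f x = l :=
  (hper.minimalPeriod_le hl).eq_of_not_lt fun h =>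
    hlt _ h (hper.minimalPeriod_pos hl) (isPeriodicPt_minimalPeriod f x)

variable {α : Type*} [ConditionallyCompleteLinearOrder α] [TopologicalSpace α] [OrderTopology α]
  [DenselyOrdered α] {T : α → α} {c x z : α} {J S : Set α}

theorem exists_minimalPeriod_eq_of_horseshoe (hT : ContinuousOn T (uIcc x c)) (hx : T x = c)
    (hc : IsFixedPt T c) (hxc : x ≠ c) (hz : z ∈ uIcc x c) (hxz : x ∈ uIcc (T z) c) {l : ℕ}
    (hl : 0 < l) : ∃ y ∈ uIcc x c, y ≠ c ∧ minimalPeriod T y = l := by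
  have hTz : T z ≠ c := fun h => hxc (by rwa [h, uIcc_self] at hxz)
  have hzx : z ≠ x := fun h => hTz (h ▸ hx)
  have hzc : z ≠ c := fun h => hTz (h ▸ hc)
  have hxz_sub : uIcc x z ⊆ uIcc x c := uIcc_subset_uIcc_left hz
  have hcz_sub : uIcc c z ⊆ uIcc x c := uIcc_comm c z ▸ uIcc_subset_uIcc_right hz
  have hbig : uIcc x c ⊆ uIcc c (T z) := by
    rw [uIcc_comm c]
    exact uIcc_subset_uIcc_right hxz
  have hx_cover : SurjOn T (uIcc x z) (uIcc x c) :=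
    hbig.trans (hx ▸ intermediate_value_uIcc (hT.mono hxz_sub))
  have hc_cover : SurjOn T (uIcc c z) (uIcc x c) :=
    hbig.trans (by simpa only [hc.eq] using intermediate_value_uIcc (hT.mono hcz_sub))
  set a : ℕ → α := fun i => if i = 0 ∨ i = l then x else c with ha
  have ha_sub (i : ℕ) : uIcc (a i) z ⊆ uIcc x c := by simp only [ha]; split_ifs <;> assumption
  have ha_cover (i : ℕ) : SurjOn T (uIcc (a i) z) (uIcc x c) := by
    simp only [ha]; split_ifs <;> assumption
  obtain ⟨y, hy, hper⟩ := exists_isPeriodicPt_itinerary (b := fun _ => z)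
    (fun i _ => hT.mono (ha_sub i)) (fun i _ => (ha_cover i).mono subset_rfl (ha_sub _))
    (show uIcc (a 0) z ⊆ uIcc (a l) z by simp [ha])
  have hy0 : y ∈ uIcc x z := by simpa [ha] using hy 0 l.zero_le
  have hmid {i : ℕ} (hi : 0 < i) (hil : i < l) : T^[i] y ∈ uIcc z c := by
    simpa only [ha, hi.ne', hil.ne, or_self, if_false, uIcc_comm] using hy i hil.le
  have hyz : y ≠ z := by
    rintro rfl
    refine hzx (eq_of_mem_uIcc_of_mem_uIcc hz (uIcc_subset_uIcc_right ?_ hxz))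
    rcases (Nat.one_le_iff_ne_zero.2 hl.ne').lt_or_eq with h1 | rfl
    · exact hmid one_pos h1
    · have hfix : T y = y := hper
      rw [hfix]
      exact left_mem_uIcc
  refine ⟨y, hxz_sub hy0, ?_, minimalPeriod_eq_of_forall_lt hl hper fun d hdl hd hyd => ?_⟩
  · rintro rfl
    exact hyz (eq_of_mem_uIcc_of_mem_uIcc_of_mem_uIcc hz hy0 right_mem_uIcc)
  · exact hyz (eq_of_mem_uIcc_of_mem_uIcc_of_mem_uIcc hz hy0 (hyd.eq ▸ hmid hd hdl))

/-- A finite set lying on one side of `c`, which `T` maps into itself except that points may be sent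
to `c`, and whose point nearest to `c` has a preimage between itself and `c`. -/
structure IsRepellingSet (T : α → α) (c : α) (S : Set α) : Prop where
  finite : S.Finite
  notMem : c ∉ S
  lt_iff_lt : ∀ p ∈ S, ∀ q ∈ S, (p < c ↔ q < c)
  mapsTo : MapsTo T S (insert c S)
  exists_nearest_preimage : ∃ w ∈ S, (∀ p ∈ S, w ∈ uIcc p c) ∧ ∃ x ∈ uIcc w c, T x = w

theorem IsRepellingSet.exists_isFixedPt (hS : IsRepellingSet T c S) (hT : ContinuousOn T J)
    (hJ : J.OrdConnected) (hSJ : S ⊆ J) (hcJ : c ∈ J) (hc : IsFixedPt T c) :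
    ∃ y ∈ J, y ≠ c ∧ IsFixedPt T y := by
  obtain ⟨w, hwS, hw, x, hxw, hTx⟩ := hS.exists_nearest_preimage
  obtain ⟨p, hpS, hp⟩ := exists_farthest hS.finite ⟨w, hwS⟩ hS.lt_iff_lt
  have hTp : T p ∈ uIcc p c := (hS.mapsTo hpS).elim (fun h => h ▸ right_mem_uIcc) (hp _)
  have hxp : x ∈ uIcc p c := uIcc_subset_uIcc_right (hw p hpS) hxw
  have hxc : x ≠ c := by
    rintro rfl
    exact hS.notMem (hc.symm.trans hTx ▸ hwS)
  have hsub : uIcc p x ⊆ J := hJ.uIcc_subset (hSJ hpS) (hJ.uIcc_subset (hSJ hpS) hcJ hxp)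
  obtain ⟨y, hy, hfix⟩ : ∃ y ∈ uIcc p x, IsFixedPt T y := by
    rw [← hTx] at hxw
    simp only [mem_uIcc] at hxw hTp hxp
    rcases le_total p c with hpc | hcp
    · refine exists_mem_uIcc_isFixedPt (hT.mono hsub) ?_ ?_ <;> grind
    · rw [uIcc_comm] at hsub ⊢
      refine exists_mem_uIcc_isFixedPt (hT.mono hsub) ?_ ?_ <;> grind
  refine ⟨y, hsub hy, ?_, hfix⟩
  rintro rfl
  exact hxc (eq_of_mem_uIcc_of_mem_uIcc_of_mem_uIcc hxp hy right_mem_uIcc).symm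

theorem IsRepellingSet.exists_minimalPeriod_eq (hS : IsRepellingSet T c S) (hT : ContinuousOn T J)
    (hJ : J.OrdConnected) (hSJ : S ⊆ J) (hcJ : c ∈ J) (hc : IsFixedPt T c)
    (hU : ∀ U ⊆ S, U.Nonempty → ¬MapsTo T U U) {l : ℕ} (hl : 0 < l) :
    ∃ y ∈ J, y ≠ c ∧ minimalPeriod T y = l := by
  suffices h : ∃ x ∈ S, T x = c ∧ ∃ z ∈ uIcc x c, x ∈ uIcc (T z) c by
    obtain ⟨x, hxS, hTx, z, hz, hxz⟩ := h
    have hsub : uIcc x c ⊆ J := hJ.uIcc_subset (hSJ hxS) hcJ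
    obtain ⟨y, hy, hyc, hper⟩ := exists_minimalPeriod_eq_of_horseshoe (hT.mono hsub) hTx hc
      (fun h => hS.notMem (h ▸ hxS)) hz hxz hl
    exact ⟨y, hsub hy, hyc, hper⟩
  obtain ⟨w, hwS, hw, x₀, hx₀, hTx₀⟩ := hS.exists_nearest_preimage
  obtain ⟨p, hpS, hp⟩ := not_subset.1 (hU S subset_rfl ⟨w, hwS⟩)
  obtain ⟨x, ⟨hxS, hTx⟩, hx⟩ := exists_nearest (S := {p ∈ S | T p = c}) (hS.finite.sep _)
    ⟨p, hpS, (hS.mapsTo hpS).resolve_right hp⟩ fun p hp q hq => hS.lt_iff_lt p hp.1 q hq.1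
  refine ⟨x, hxS, hTx, ?_⟩
  rcases {p ∈ S | p ∈ uIcc x c ∧ p ≠ x}.eq_empty_or_nonempty with hempty | hne
  · have hwx : w = x := by
      by_contra hne
      exact hempty.subset ⟨hwS, hw x hxS, hne⟩
    exact ⟨x₀, hwx ▸ hx₀, by rw [hTx₀, hwx]; exact left_mem_uIcc⟩
  · obtain ⟨p, ⟨hpS, hpx, hp_ne⟩, hp⟩ := not_subset.1 (hU _ (sep_subset _ _) hne)
    have hTp : T p ∈ S := (hS.mapsTo hpS).resolve_left fun h =>
      hp_ne (eq_of_mem_uIcc_of_mem_uIcc hpx (hx p ⟨hpS, h⟩))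
    refine ⟨p, hpx, ?_⟩
    by_contra hx_far
    have hTpx := (mem_uIcc_or_mem_uIcc_of_lt_iff_lt (hS.lt_iff_lt _ hTp x hxS)).resolve_right hx_far
    exact hp ⟨hTp, hTpx, fun h => hx_far (h ▸ left_mem_uIcc)⟩

end Repelling

section Cycle

/-- A finite set forming a single cycle of `f`, encoded by finiteness and minimality among the
invariant sets. The empty set also qualifies. -/
structure IsCycle {α : Type*} (f : α → α) (P : Set α) : Prop where
  finite : P.Finite
  mapsTo : MapsTo f P P
  eq_of_mapsTo : ∀ U ⊆ P, U.Nonempty → MapsTo f U U → U = P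

theorem isCycle_range_iterate {α : Type*} {f : α → α} {x : α} (hx : x ∈ periodicPts f) :
    IsCycle f (range (f^[·] x)) where
  finite := by
    refine ((finite_lt_nat (minimalPeriod f x)).image (f^[·] x)).subset ?_
    rintro _ ⟨i, rfl⟩
    exact ⟨_, Nat.mod_lt _ (minimalPeriod_pos_of_mem_periodicPts hx), iterate_mod_minimalPeriod_eq⟩
  mapsTo := by
    rintro _ ⟨i, rfl⟩
    exact ⟨i + 1, iterate_succ_apply' f i x⟩
  eq_of_mapsTo := by
    rintro U hU ⟨p, hp⟩ hmaps
    refine hU.antisymm ?_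
    rintro _ ⟨j, rfl⟩
    obtain ⟨i, rfl⟩ := hU hp
    obtain ⟨n, hn, hper⟩ := hx
    have hij : f^[j + (n * i - i)] (f^[i] x) = f^[j] x := by
      rw [← iterate_add_apply, add_assoc, Nat.sub_add_cancel (Nat.le_mul_of_pos_left i hn),
        iterate_add_apply, (hper.mul_const i).eq]
    exact hij.subst (hmaps.iterate _ hp)

namespace IsCycle

variable {α : Type*} {f : α → α} {P : Set α} {p : α}

theorem forall_of_forall_apply (hP : IsCycle f P) {Q : α → Prop} (hQ : ∀ p ∈ P, Q p → Q (f p))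
    (hp : p ∈ P) (hQp : Q p) : ∀ q ∈ P, Q q := by
  have hU := hP.eq_of_mapsTo {q ∈ P | Q q} (sep_subset _ _) ⟨p, hp, hQp⟩
    fun q hq => ⟨hP.mapsTo hq.1, hQ q hq.1 hq.2⟩
  exact fun q hq => (hU.symm.subset hq).2

theorem apply_ne (hP : IsCycle f P) (hnt : P.Nontrivial) (hp : p ∈ P) : f p ≠ p := by
  intro hfix
  have hU := hP.eq_of_mapsTo {p} (singleton_subset_iff.2 hp) (singleton_nonempty p)
    (mapsTo_singleton.2 hfix)
  exact not_nontrivial_singleton (hU ▸ hnt)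

end IsCycle

theorem nontrivial_range_iterate {α : Type*} {f : α → α} {x : α} (hx : minimalPeriod f x ≠ 1) :
    (range (f^[·] x)).Nontrivial :=
  ⟨x, ⟨0, rfl⟩, f x, ⟨1, rfl⟩, fun h => hx (minimalPeriod_eq_one_iff_isFixedPt.2 h.symm)⟩

theorem exists_consecutive {α : Type*} [LinearOrder α] {P : Set α} (hP : P.Finite) {A : α → Prop}
    {p q : α} (hp : p ∈ P) (hq : q ∈ P) (hpq : p ≤ q) (hAp : A p) (hAq : ¬A q) :
    ∃ u ∈ P, ∃ v ∈ P, p ≤ u ∧ u < v ∧ v ≤ q ∧ ¬A v ∧ (∀ r ∈ P, r ≤ u ∨ v ≤ r) ∧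
      ∀ r ∈ P, p ≤ r → r ≤ u → A r := by
  obtain ⟨v, ⟨hvP, hpv, hAv⟩, hv⟩ := exists_min_image {r ∈ P | p ≤ r ∧ ¬A r} id (hP.sep _)
    ⟨q, hq, hpq, hAq⟩
  have hp_lt : p < v := hpv.lt_of_ne fun h => hAv (h ▸ hAp)
  obtain ⟨u, ⟨huP, huv⟩, hu⟩ := exists_max_image {r ∈ P | r < v} id (hP.sep _) ⟨p, hp, hp_lt⟩
  refine ⟨u, huP, v, hvP, hu p ⟨hp, hp_lt⟩, huv, hv q ⟨hq, hpq, hAq⟩, hAv, fun r hr => ?_,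
    fun r hr hpr hru => ?_⟩
  · exact (lt_or_ge r v).imp_left fun h => hu r ⟨hr, h⟩
  · by_contra hAr
    exact (hv r ⟨hr, hpr, hAr⟩).not_gt (hru.trans_lt huv)

/-- A fixed point `c` of `f` in a gap `(u, v)` of the set `P` whose two ends are exchanged across
the gap. -/
structure IsCentral {α : Type*} [LinearOrder α] (f : α → α) (P : Set α) (u c v : α) : Prop where
  left_mem : u ∈ P
  right_mem : v ∈ P
  left_lt : u < c
  lt_right : c < v
  isFixedPt : IsFixedPt f c
  le_apply_left : v ≤ f u
  apply_right_le : f v ≤ u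
  le_or_le : ∀ p ∈ P, p ≤ u ∨ v ≤ p

namespace IsCentral

variable {α : Type*} [LinearOrder α] {f : α → α} {P J : Set α} {u c v : α}

theorem mem (h : IsCentral f P u c v) (hJ : J.OrdConnected) (hPJ : P ⊆ J) : c ∈ J :=
  hJ.out (hPJ h.left_mem) (hPJ h.right_mem) ⟨h.left_lt.le, h.lt_right.le⟩

theorem ne {p : α} (h : IsCentral f P u c v) (hp : p ∈ P) : p ≠ c :=
  (h.le_or_le p hp).elim (fun hpu => (hpu.trans_lt h.left_lt).ne)
    fun hvp => (h.lt_right.trans_le hvp).ne'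

theorem eq_of_mem_uIcc_of_mem_uIcc {y : α} (h : IsCentral f P u c v)
    (hu : y ∈ uIcc u c) (hv : y ∈ uIcc v c) : y = c := by
  rw [uIcc_of_le h.left_lt.le] at hu
  rw [uIcc_of_ge h.lt_right.le] at hv
  exact le_antisymm hu.2 hv.1

end IsCentral

variable {α : Type*} [ConditionallyCompleteLinearOrder α] [TopologicalSpace α] [OrderTopology α]
  [DenselyOrdered α] {f : α → α} {P J : Set α} {u c v : α}

theorem exists_isFixedPt_of_lt_apply_of_apply_lt {p q : α} (hf : ContinuousOn f (Icc p q))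
    (hpq : p ≤ q) (hp : p < f p) (hq : f q < q) : ∃ c, p < c ∧ c < q ∧ IsFixedPt f c := by
  obtain ⟨c, hc, hfix⟩ := exists_mem_uIcc_isFixedPt (uIcc_of_le hpq ▸ hf) hp.le hq.le
  rw [uIcc_of_le hpq] at hc
  exact ⟨c, hc.1.lt_of_ne fun h => hp.ne (h ▸ hfix.symm),
    hc.2.lt_of_ne fun h => hq.ne (h ▸ hfix), hfix⟩

theorem IsCycle.exists_isCentral (hP : IsCycle f P) (hnt : P.Nontrivial) (hf : ContinuousOn f J)
    (hJ : J.OrdConnected) (hPJ : P ⊆ J) :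
    ∃ u c v, IsCentral f P u c v ∧ ∀ p ∈ P, p < c → p < f p := by
  obtain ⟨p, hpP, hp⟩ := exists_min_image P id hP.finite hnt.nonempty
  obtain ⟨q, hqP, hq⟩ := exists_max_image P id hP.finite hnt.nonempty
  have hp_lt : p < f p := (hp _ (hP.mapsTo hpP)).lt_of_ne (hP.apply_ne hnt hpP).symm
  obtain ⟨u, huP, v, hvP, hpu, huv, -, hAv, hgap, hA⟩ := exists_consecutive hP.finite
    (A := fun r => r < f r) hpP hqP (hp q hqP) hp_lt (hq _ (hP.mapsTo hqP)).not_gt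
  have hu : u < f u := hA u huP hpu le_rfl
  have hv : f v < v := (not_lt.1 hAv).lt_of_ne (hP.apply_ne hnt hvP)
  obtain ⟨c, huc, hcv, hc⟩ := exists_isFixedPt_of_lt_apply_of_apply_lt
    (hf.mono (hJ.out (hPJ huP) (hPJ hvP))) huv.le hu hv
  refine ⟨u, c, v, ⟨huP, hvP, huc, hcv, hc, ?_, ?_, hgap⟩, fun r hr hrc => ?_⟩
  · exact (hgap _ (hP.mapsTo huP)).resolve_left hu.not_ge
  · exact (hgap _ (hP.mapsTo hvP)).resolve_right hv.not_ge
  · exact hA r hr (hp r hr) ((hgap r hr).resolve_right (hrc.trans hcv).not_ge)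

end Cycle

section Shadowing

variable {α : Type*} [ConditionallyCompleteLinearOrder α] [TopologicalSpace α] [OrderTopology α]
  [DenselyOrdered α] {f : α → α} {c : α} {k : ℕ} {W : ℕ → α}

theorem exists_mem_uIcc_returnMap_eq (hf : ∀ t < k, ContinuousOn f (uIcc (W t) c))
    (hc : IsFixedPt f c) (hW : ∀ t < k, W (t + 1) ∈ uIcc (f (W t)) c) (hk : W k ≠ c) :
    ∃ x ∈ uIcc (W 0) c, returnMap f c k (crossings c W k) x = W k := by
  obtain ⟨x, hx, hxk⟩ := exists_itinerary (K := fun t => uIcc (W t) c)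
    (fun t ht => surjOn_uIcc_of_isFixedPt (hf t ht) hc (hW t ht)) (left_mem_uIcc : W k ∈ _)
  refine ⟨x, hx 0 k.zero_le, (returnMap_of_crossings_eq ?_).trans hxk⟩
  exact crossings_congr fun i hi =>
    lt_iff_lt_of_mem_uIcc (hx i hi) (iterate_ne_of_le hc hi (hxk ▸ hk))

theorem lt_iff_lt_of_returnMap_ne {α : Type*} [LinearOrder α] {f : α → α} {c x : α} {k μ : ℕ}
    (hμ : Even μ) (h : returnMap f c k μ x ≠ c) : x < c ↔ returnMap f c k μ x < c := by
  have hcross := crossings_eq_of_returnMap_ne h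
  rw [returnMap_of_crossings_eq hcross]
  exact (even_crossings_iff c (f^[·] x) k).1 (hcross ▸ hμ)

end Shadowing

section Sharkovsky

/-- `f` has a cycle of period `n` through a point of `J`. -/
def HasPeriod {α : Type*} (f : α → α) (J : Set α) (n : ℕ) : Prop := ∃ y ∈ J, minimalPeriod f y = n

section IteratePeriod

variable {α : Type*} {f : α → α} {J : Set α} {n : ℕ}

theorem HasPeriod.iterate_two_pow {e : ℕ} (h : HasPeriod f J (2 ^ e * n)) :
    HasPeriod f^[2 ^ e] J n := by
  obtain ⟨y, hy, hper⟩ := h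
  refine ⟨y, hy, ?_⟩
  rw [minimalPeriod_iterate_eq_div_gcd (by positivity), hper, Nat.gcd_mul_right_left,
    Nat.mul_div_cancel_left _ (by positivity)]

theorem HasPeriod.of_iterate_two_pow {e : ℕ} (h : HasPeriod f^[2 ^ e] J n) :
    ∃ i ≤ e, (Even n → i = e) ∧ HasPeriod f J (2 ^ i * n) := by
  obtain ⟨y, hy, hper⟩ := h
  rw [minimalPeriod_iterate_eq_div_gcd (by positivity)] at hper
  obtain ⟨i, hi, hgcd⟩ := (Nat.dvd_prime_pow Nat.prime_two).1
    (Nat.gcd_dvd_right (minimalPeriod f y) (2 ^ e))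
  have hmul : minimalPeriod f y = 2 ^ i * n := by
    rw [← hper, ← hgcd, Nat.mul_div_cancel' (Nat.gcd_dvd_left _ _)]
  refine ⟨i, hi, fun heven => ?_, y, hy, hmul⟩
  by_contra hne
  have hdvd : 2 ^ (i + 1) ∣ 2 ^ i := by
    rw [← hgcd]
    refine Nat.dvd_gcd ?_ (pow_dvd_pow 2 (by omega))
    rw [hmul, pow_succ]
    exact Nat.mul_dvd_mul_left _ heven.two_dvd
  exact (Nat.pow_lt_pow_right one_lt_two i.lt_succ_self).not_ge (Nat.le_of_dvd (by positivity) hdvd)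

end IteratePeriod

variable {α : Type*} [ConditionallyCompleteLinearOrder α] [TopologicalSpace α] [OrderTopology α]
  [DenselyOrdered α] {f : α → α} {P J : Set α} {u c v : α} {l n : ℕ}

theorem HasPeriod.exists_isCentral (h : HasPeriod f J n) (hn : 2 ≤ n) (hf : ContinuousOn f J)
    (hfJ : MapsTo f J J) (hJ : J.OrdConnected) :
    ∃ P ⊆ J, IsCycle f P ∧ (∀ p ∈ P, minimalPeriod f p = n) ∧ ∃ u c v, IsCentral f P u c v := by
  obtain ⟨x, hxJ, rfl⟩ := h
  have hx : x ∈ periodicPts f := minimalPeriod_pos_iff_mem_periodicPts.1 (by omega)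
  have hPJ : range (f^[·] x) ⊆ J := range_subset_iff.2 fun i => hfJ.iterate i hxJ
  have hP := isCycle_range_iterate hx
  obtain ⟨u, c, v, hcentral, -⟩ :=
    hP.exists_isCentral (nontrivial_range_iterate (by omega)) hf hJ hPJ
  refine ⟨_, hPJ, hP, ?_, u, c, v, hcentral⟩
  rintro _ ⟨i, rfl⟩
  exact minimalPeriod_apply_iterate hx i

theorem IsCentral.isRepellingSet_returnMap (h : IsCentral f P u c v) (hP : IsCycle f P)
    (hf : ContinuousOn f J) (hJ : J.OrdConnected) (hPJ : P ⊆ J) :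
    IsRepellingSet (returnMap f c 2 2) c (P ∩ Iio c) where
  finite := hP.finite.subset inter_subset_left
  notMem hc := lt_irrefl c hc.2
  lt_iff_lt p hp q hq := iff_of_true hp.2 hq.2
  mapsTo p hp := by
    by_cases hne : returnMap f c 2 2 p = c
    · exact Or.inl hne
    · refine Or.inr ⟨?_, (lt_iff_lt_of_returnMap_ne even_two hne).1 hp.2⟩
      rw [returnMap_of_crossings_eq (crossings_eq_of_returnMap_ne hne)]
      exact hP.mapsTo.iterate 2 hp.1
  exists_nearest_preimage := by
    refine ⟨u, ⟨h.left_mem, h.left_lt⟩, fun p hp => ?_, ?_⟩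
    · exact mem_uIcc_of_le ((h.le_or_le p hp.1).resolve_right (hp.2.trans h.lt_right).not_ge)
        h.left_lt.le
    · have hW (t : ℕ) : (if Even t then u else v) ∈ J := by
        split_ifs
        exacts [hPJ h.left_mem, hPJ h.right_mem]
      have hstep (t : ℕ) : (if Even (t + 1) then u else v) ∈
          uIcc (f (if Even t then u else v)) c := by
        simp only [Nat.even_add_one, mem_uIcc]
        grind [IsCentral]
      obtain ⟨x, hx, hTx⟩ := exists_mem_uIcc_returnMap_eq (k := 2)
        (W := fun t => if Even t then u else v)
        (fun t _ => hf.mono (hJ.uIcc_subset (hW t) (h.mem hJ hPJ))) h.isFixedPt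
        (fun t _ => hstep t) (by simpa using h.left_lt.ne)
      exact ⟨x, by simpa using hx, by
        simpa [crossings_succ, crossings_zero, h.left_lt, h.lt_right.not_gt] using hTx⟩

theorem HasPeriod.two (h : HasPeriod f J n) (hn : 2 ≤ n) (hf : ContinuousOn f J)
    (hfJ : MapsTo f J J) (hJ : J.OrdConnected) : HasPeriod f J 2 := by
  obtain ⟨P, hPJ, hP, -, u, c, v, hcentral⟩ := h.exists_isCentral hn hf hfJ hJ
  have hc := hcentral.isFixedPt
  obtain ⟨y, hyJ, hyc, hy⟩ := (hcentral.isRepellingSet_returnMap hP hf hJ hPJ).exists_isFixedPt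
    (continuousOn_returnMap hf hfJ hc) hJ (inter_subset_left.trans hPJ) (hcentral.mem hJ hPJ)
    (isFixedPt_returnMap hc)
  exact ⟨y, hyJ, (minimalPeriod_of_minimalPeriod_returnMap (m := 1) hc (Nat.coprime_one_left 2) hyc
    (minimalPeriod_eq_one_iff_isFixedPt.2 hy) one_pos).1⟩

theorem HasPeriod.one (h : HasPeriod f J n) (hn : 2 ≤ n) (hf : ContinuousOn f J)
    (hfJ : MapsTo f J J) (hJ : J.OrdConnected) : HasPeriod f J 1 := by
  obtain ⟨P, hPJ, -, -, u, c, v, hcentral⟩ := h.exists_isCentral hn hf hfJ hJ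
  exact ⟨c, hcentral.mem hJ hPJ, minimalPeriod_eq_one_iff_isFixedPt.2 hcentral.isFixedPt⟩

theorem not_mapsTo_returnMap_two {α : Type*} [LinearOrder α] {f : α → α} {c : α} {U : Set α}
    (hc : IsFixedPt f c) (hn : Odd n) (hU : ∀ p ∈ U, IsPeriodicPt f n p) (hcU : c ∉ U)
    (hne : U.Nonempty) : ¬MapsTo (returnMap f c 2 2) U U := by
  rintro hmaps
  obtain ⟨p, hp⟩ := hne
  have hcross : crossings c (f^[·] p) (2 * n) = 2 * n :=
    (iterate_returnMap_of_ne hc fun h => hcU (h ▸ hmaps.iterate n hp)).2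
  have heven : Even (crossings c (f^[·] p) n) :=
    (even_crossings_iff _ _ _).2 (by rw [(hU p hp).eq, iterate_zero_apply])
  rw [mul_comm, crossings_orbit_mul (hU p hp)] at hcross
  rw [Nat.eq_of_mul_eq_mul_right two_pos hcross] at heven
  exact Nat.not_even_iff_odd.2 hn heven

theorem HasPeriod.two_mul_of_odd (h : HasPeriod f J n) (hn : 2 ≤ n) (hodd : Odd n) (hl : 0 < l)
    (hf : ContinuousOn f J) (hfJ : MapsTo f J J) (hJ : J.OrdConnected) : HasPeriod f J (2 * l) := by
  obtain ⟨P, hPJ, hP, hper, u, c, v, hcentral⟩ := h.exists_isCentral hn hf hfJ hJ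
  have hc := hcentral.isFixedPt
  have hS := hcentral.isRepellingSet_returnMap hP hf hJ hPJ
  obtain ⟨y, hyJ, hyc, hy⟩ := hS.exists_minimalPeriod_eq
    (continuousOn_returnMap hf hfJ hc) hJ (inter_subset_left.trans hPJ) (hcentral.mem hJ hPJ)
    (isFixedPt_returnMap hc) (fun U hU => not_mapsTo_returnMap_two hc hodd
      (fun p hp => hper p (hU hp).1 ▸ isPeriodicPt_minimalPeriod f p) (notMem_subset hU hS.notMem))
    hl
  exact ⟨y, hyJ, (minimalPeriod_of_minimalPeriod_returnMap (m := 1) hc (Nat.coprime_one_left 2) hyc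
    hy hl).1⟩

end Sharkovsky

section Sharkovsky

theorem exists_lt_iff_apply_lt_of_odd {α : Type*} [LinearOrder α] {f : α → α} {x : α} {n : ℕ}
    (c : α) (hn : Odd n) (hx : IsPeriodicPt f n x) :
    ∃ i < n, (f^[i] x < c ↔ f^[i + 1] x < c) := by
  by_contra hswitch
  have hcross : crossings c (f^[·] x) n = n := by
    rw [crossings, Finset.filter_true_of_mem, Finset.card_range]
    exact fun i hi hside => hswitch ⟨i, Finset.mem_range.1 hi, hside⟩
  have heven : Even (crossings c (f^[·] x) n) :=
    (even_crossings_iff _ _ _).2 (by rw [hx.eq, iterate_zero_apply])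
  exact Nat.not_even_iff_odd.2 hn (hcross ▸ heven)

variable {α : Type*} [ConditionallyCompleteLinearOrder α] [TopologicalSpace α] [OrderTopology α]
  [DenselyOrdered α] {f : α → α} {P J : Set α} {u c v : α} {l n : ℕ}

/-- Every vertex `a i` stands for the interval between `a i` and the fixed point `c`. Cutting the
`j`-th interval short of `c` keeps the periodic orbit away from `c`. -/
theorem exists_isPeriodicPt_ne_of_loop {a : ℕ → α} {j : ℕ} {w : α}
    (hf : ∀ i < l, ContinuousOn f (uIcc (a i) c)) (hc : IsFixedPt f c)
    (hstep : ∀ i < l, a (i + 1) ∈ uIcc (f (a i)) c) (hl : a l = a 0) (hjl : j < l)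
    (hw : w ∈ uIcc (a j) c) (hcw : c ≠ w) (hcover : SurjOn f (uIcc (a j) w) (uIcc (a (j + 1)) c)) :
    ∃ y ≠ c, IsPeriodicPt f l y ∧ ∀ i ≤ l, f^[i] y ∈ uIcc (a i) c := by
  set b : ℕ → α := fun i => if i = j then w else c with hb
  have hbj : b j = w := if_pos rfl
  have hb_of_ne {i : ℕ} (hi : i ≠ j) : b i = c := if_neg hi
  have hsub (i : ℕ) : uIcc (a i) (b i) ⊆ uIcc (a i) c := by
    refine uIcc_subset_uIcc_left ?_
    rcases eq_or_ne i j with rfl | hi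
    · exact hbj ▸ hw
    · exact hb_of_ne hi ▸ right_mem_uIcc
  have hcover_b (i : ℕ) (hi : i < l) : SurjOn f (uIcc (a i) (b i)) (uIcc (a (i + 1)) c) := by
    rcases eq_or_ne i j with rfl | hij
    · exact hbj ▸ hcover
    · rw [hb_of_ne hij]
      exact surjOn_uIcc_of_isFixedPt (hf i hi) hc (hstep i hi)
  obtain ⟨y, hy, hper⟩ := exists_isPeriodicPt_itinerary (fun i hi => (hf i hi).mono (hsub i))
    (fun i hi => (hcover_b i hi).mono subset_rfl (hsub (i + 1)))
    (show uIcc (a 0) (b 0) ⊆ uIcc (a l) (b l) by rw [hl, hb_of_ne hjl.ne']; exact hsub 0)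
  refine ⟨y, ?_, hper, fun i hi => hsub i (hy i hi)⟩
  rintro rfl
  have hyj := hy j hjl.le
  rw [hbj, (hc.iterate j).eq] at hyj
  exact hcw (eq_of_mem_uIcc_of_mem_uIcc_of_mem_uIcc hw hyj right_mem_uIcc)

theorem IsCentral.exists_uIcc_surjOn {x : α} (h : IsCentral f P u c v) (hx : x ∈ P)
    (hside : x < c ↔ f x < c) (hf : ContinuousOn f (uIcc x c)) :
    ∃ w ∈ uIcc x c, c ≠ w ∧ SurjOn f (uIcc x w) (uIcc (f x) c) := by
  suffices hw : ∃ w ∈ uIcc x c, c ≠ w ∧ c ∈ uIcc (f x) (f w) by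
    obtain ⟨w, hw, hcw, hfw⟩ := hw
    exact ⟨w, hw, hcw, (uIcc_subset_uIcc_left hfw).trans
      (intermediate_value_uIcc (hf.mono (uIcc_subset_uIcc_left hw)))⟩
  simp only [mem_uIcc]
  by_cases hxc : x < c
  · exact ⟨u, by grind [IsCentral], h.left_lt.ne', by grind [IsCentral]⟩
  · exact ⟨v, by grind [IsCentral], h.lt_right.ne, by grind [IsCentral]⟩

theorem IsCentral.exists_isPeriodicPt_of_odd (h : IsCentral f P u c v) (hP : IsCycle f P)
    (hf : ContinuousOn f J) (hJ : J.OrdConnected) (hPJ : P ⊆ J) (hn : Odd n)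
    (hu : IsPeriodicPt f n u) (hl : Odd l) (hnl : n < l) :
    ∃ y ≠ c, IsPeriodicPt f l y ∧ y ∈ uIcc u c ∧
      ∀ i, n ≤ i → i ≤ l → f^[i] y ∈ uIcc (if Odd i then u else v) c := by
  -- The loop runs once through the cycle of `u` and then alternates between `u` and `v`.
  set a : ℕ → α := fun i => if i < n then f^[i] u else if Odd i then u else v with ha
  have ha_orbit {i : ℕ} (hi : i ≤ n) : a i = f^[i] u := by
    rcases hi.lt_or_eq with hi | rfl
    · exact if_pos hi
    · rw [hu.eq]
      exact (if_neg (lt_irrefl i)).trans (if_pos hn)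
  have ha_tail {i : ℕ} (hi : n ≤ i) : a i = if Odd i then u else v := if_neg hi.not_gt
  have ha_succ {i : ℕ} (hi : i < n) : a (i + 1) = f (a i) := by
    rw [ha_orbit hi, ha_orbit hi.le, iterate_succ_apply']
  have haP (i : ℕ) : a i ∈ P := by
    simp only [ha]
    split_ifs
    exacts [hP.mapsTo.iterate i h.left_mem, h.left_mem, h.right_mem]
  have hfa (i : ℕ) : ContinuousOn f (uIcc (a i) c) :=
    hf.mono (hJ.uIcc_subset (hPJ (haP i)) (h.mem hJ hPJ))
  have hstep (i : ℕ) : a (i + 1) ∈ uIcc (f (a i)) c := by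
    rcases lt_or_ge i n with hi | hi
    · exact ha_succ hi ▸ left_mem_uIcc
    · rw [ha_tail hi, ha_tail (hi.trans i.le_succ), mem_uIcc]
      grind [IsCentral]
  obtain ⟨j, hjn, hj⟩ := exists_lt_iff_apply_lt_of_odd c hn hu
  obtain ⟨w, hw, hcw, hcover⟩ := h.exists_uIcc_surjOn (haP j)
    (by rwa [← ha_succ hjn, ha_orbit hjn.le, ha_orbit hjn]) (hfa j)
  have ha_zero : a 0 = u := ha_orbit n.zero_le
  obtain ⟨y, hyc, hper, hy⟩ := exists_isPeriodicPt_ne_of_loop (fun i _ => hfa i) h.isFixedPt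
    (fun i _ => hstep i) (by rw [ha_zero, ha_tail hnl.le, if_pos hl]) (hjn.trans hnl) hw hcw
    (ha_succ hjn ▸ hcover)
  exact ⟨y, hyc, hper, ha_zero ▸ hy 0 l.zero_le, fun i hi hil => ha_tail hi ▸ hy i hil⟩

theorem HasPeriod.of_odd_of_forall_lt (h : HasPeriod f J n) (hn : 2 ≤ n) (hodd : Odd n)
    (hmin : ∀ d < n, 2 ≤ d → Odd d → ¬HasPeriod f J d) (hl : Odd l) (hnl : n < l)
    (hf : ContinuousOn f J) (hfJ : MapsTo f J J) (hJ : J.OrdConnected) : HasPeriod f J l := by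
  obtain ⟨P, hPJ, hP, hper, u, c, v, hcentral⟩ := h.exists_isCentral hn hf hfJ hJ
  have hu : IsPeriodicPt f n u := hper u hcentral.left_mem ▸ isPeriodicPt_minimalPeriod f u
  obtain ⟨y, hyc, hyl, hyu, hy⟩ :=
    hcentral.exists_isPeriodicPt_of_odd hP hf hJ hPJ hodd hu hl hnl
  have hyJ : y ∈ J := hJ.uIcc_subset (hPJ hcentral.left_mem) (hcentral.mem hJ hPJ) hyu
  have hiter_ne (i : ℕ) : f^[i] y ≠ c :=
    iterate_ne_of_mem_periodicPts hcentral.isFixedPt ⟨l, hl.pos, hyl⟩ hyc i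
  refine ⟨y, hyJ, (hyl.minimalPeriod_le hl.pos).eq_of_not_lt fun hlt => ?_⟩
  set d := minimalPeriod f y
  obtain ⟨N, hN⟩ : d ∣ l := hyl.minimalPeriod_dvd
  have hdN : Odd d ∧ Odd N := Nat.odd_mul.1 (hN ▸ hl)
  have hN_ge : 3 ≤ N := by
    obtain ⟨t, rfl⟩ := hdN.2
    rcases t.eq_zero_or_pos with rfl | ht
    · exact absurd hN (by omega)
    · omega
  have hd_small : n + d ≤ l := by
    rcases Nat.lt_or_ge d 2 with hd | hd
    · omega
    · have hnd : n ≤ d := not_lt.1 fun hdn => hmin d hdn hd hdN.1 ⟨y, hyJ, rfl⟩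
      nlinarith
  refine hiter_ne n (hcentral.eq_of_mem_uIcc_of_mem_uIcc ?_ ?_)
  · simpa [hodd] using hy n le_rfl hnl.le
  · have hv := hy (n + d) (n.le_add_right d) hd_small
    rw [iterate_add_minimalPeriod_eq, if_neg (Nat.not_odd_iff_even.2 (hodd.add_odd hdN.1))] at hv
    exact hv

theorem HasPeriod.of_odd (h : HasPeriod f J n) (hn : 2 ≤ n) (hodd : Odd n) (hl : Odd l)
    (hnl : n < l) (hf : ContinuousOn f J) (hfJ : MapsTo f J J) (hJ : J.OrdConnected) :
    HasPeriod f J l := by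
  classical
  have hex : ∃ d, 2 ≤ d ∧ Odd d ∧ HasPeriod f J d := ⟨n, hn, hodd, h⟩
  obtain ⟨hmin_two, hmin_odd, hmin_per⟩ := Nat.find_spec hex
  exact hmin_per.of_odd_of_forall_lt hmin_two hmin_odd
    (fun d hd hd_two hd_odd hd_per => Nat.find_min hex hd ⟨hd_two, hd_odd, hd_per⟩) hl
    ((Nat.find_min' hex ⟨hn, hodd, h⟩).trans_lt hnl) hf hfJ hJ

namespace HasPeriod

variable {e : ℕ}

theorem two_pow (h : HasPeriod f J (2 ^ (e + 1))) (hf : ContinuousOn f J) (hfJ : MapsTo f J J)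
    (hJ : J.OrdConnected) : HasPeriod f J (2 ^ e) := by
  cases e with
  | zero => exact h.one le_rfl hf hfJ hJ
  | succ e =>
    have hfour : HasPeriod f^[2 ^ e] J 4 := iterate_two_pow (by convert h using 1; ring)
    obtain ⟨i, -, hi, htwo⟩ :=
      (hfour.two (by norm_num) (hf.iterate hfJ _) (hfJ.iterate _) hJ).of_iterate_two_pow
    rwa [hi even_two, ← pow_succ] at htwo

theorem two_pow_mul_even (h : HasPeriod f J (2 ^ e * n)) (hn : 2 ≤ n) (hodd : Odd n) (hl : 0 < l)
    (hf : ContinuousOn f J) (hfJ : MapsTo f J J) (hJ : J.OrdConnected) :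
    HasPeriod f J (2 ^ e * (2 * l)) := by
  obtain ⟨i, -, hi, heven⟩ := (h.iterate_two_pow.two_mul_of_odd hn hodd hl (hf.iterate hfJ _)
    (hfJ.iterate _) hJ).of_iterate_two_pow
  rwa [hi (even_two_mul l)] at heven

theorem two_pow_mul_odd (h : HasPeriod f J (2 ^ e * n)) (hn : 2 ≤ n) (hodd : Odd n) (hl : Odd l)
    (hnl : n < l) (hf : ContinuousOn f J) (hfJ : MapsTo f J J) (hJ : J.OrdConnected) :
    HasPeriod f J (2 ^ e * l) := by
  obtain ⟨i, hie, -, hi⟩ := (h.iterate_two_pow.of_odd hn hodd hl hnl (hf.iterate hfJ _)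
    (hfJ.iterate _) hJ).of_iterate_two_pow
  rcases hie.lt_or_eq with hlt | rfl
  · have heq : 2 ^ e * l = 2 ^ i * (2 * (2 ^ (e - (i + 1)) * l)) := by
      obtain ⟨t, rfl⟩ := Nat.exists_eq_add_of_lt hlt
      rw [Nat.add_sub_add_right, Nat.add_sub_cancel_left]
      ring
    rw [heq]
    exact hi.two_pow_mul_even (hn.trans hnl.le) hl (Nat.mul_pos (by positivity) hl.pos) hf hfJ hJ
  · exact hi

end HasPeriod

theorem two_pow_factorization_mul_oddPart (n : ℕ) : 2 ^ n.factorization 2 * oddPart n = n :=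
  Nat.ordProj_mul_ordCompl_eq_self n 2

theorem odd_oddPart (hn : 0 < n) : Odd (oddPart n) :=
  Nat.odd_iff.2 (Nat.two_dvd_ne_zero.1 (Nat.not_dvd_ordCompl Nat.prime_two hn.ne'))

namespace SharkLt

theorem imp_of_rules {H : ℕ → Prop} (h : SharkLt l n) (hl : 0 < l) (hn : 0 < n)
    (htwo_pow : ∀ e, H (2 ^ (e + 1)) → H (2 ^ e))
    (heven : ∀ e a b, 2 ≤ a → Odd a → 0 < b → H (2 ^ e * a) → H (2 ^ e * (2 * b)))
    (hodd : ∀ e a b, 2 ≤ a → Odd a → Odd b → a < b → H (2 ^ e * a) → H (2 ^ e * b))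
    (hHn : H n) : H l := by
  have hpow {i j : ℕ} (hij : i ≤ j) (hj : H (2 ^ j)) : H (2 ^ i) :=
    Nat.decreasingInduction (fun e _ => htwo_pow e) hj hij
  have two_le_oddPart (h1 : oddPart n ≠ 1) : 2 ≤ oddPart n :=
    (Nat.two_le_iff _).2 ⟨(odd_oddPart hn).pos.ne', h1⟩
  have hl_eq := two_pow_factorization_mul_oddPart l
  have hn_eq := two_pow_factorization_mul_oddPart n
  rw [← hn_eq] at hHn
  rcases h with ⟨hl1, hn1, hlt⟩ | ⟨hl1, hn1⟩ | ⟨-, hn1, hfac | ⟨hfac, hlt⟩⟩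
  · rw [hl1, mul_one] at hl_eq
    rw [hn1, mul_one] at hn_eq hHn
    rw [← hl_eq]
    exact hpow ((Nat.pow_lt_pow_iff_right one_lt_two).1 (by rwa [hl_eq, hn_eq])).le hHn
  · rw [hl1, mul_one] at hl_eq
    have hbig := heven _ _ (2 ^ l.factorization 2) (two_le_oddPart hn1) (odd_oddPart hn)
      (by positivity) hHn
    rw [← pow_succ', ← pow_add] at hbig
    exact hl_eq ▸ hpow (by omega) hbig
  · obtain ⟨t, ht⟩ := Nat.exists_eq_add_of_lt hfac
    have heq : l = 2 ^ n.factorization 2 * (2 * (2 ^ t * oddPart l)) := by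
      rw [ht] at hl_eq
      exact hl_eq.symm.trans (by ring)
    rw [heq]
    exact heven _ _ _ (two_le_oddPart hn1) (odd_oddPart hn)
      (Nat.mul_pos (by positivity) (odd_oddPart hl).pos) hHn
  · rw [← hl_eq, hfac]
    exact hodd _ _ _ (two_le_oddPart hn1) (odd_oddPart hn) (odd_oddPart hl) hlt hHn

end SharkLt

theorem HasPeriod.of_sharkLt (h : HasPeriod f J n) (hln : SharkLt l n) (hl : 0 < l) (hn : 0 < n)
    (hf : ContinuousOn f J) (hfJ : MapsTo f J J) (hJ : J.OrdConnected) : HasPeriod f J l :=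
  hln.imp_of_rules hl hn (fun _ h => h.two_pow hf hfJ hJ)
    (fun _ _ _ ha hodd hb h => h.two_pow_mul_even ha hodd hb hf hfJ hJ)
    (fun _ _ _ ha hodd hodd' hab h => h.two_pow_mul_odd ha hodd hodd' hab hf hfJ hJ) h

end Sharkovsky

section Height

theorem exists_apply_eq_of_monotoneOn {ι β : Type*} [LinearOrder β] {h : ι → β} {φ : ι → ι}
    {D : Set ι} (hD : D.Finite) (hne : D.Nonempty) (hφ : MapsTo φ D D)
    (hmono : ∀ i ∈ D, ∀ j ∈ D, h i ≤ h j → h (φ i) ≤ h (φ j)) : ∃ i ∈ D, h (φ i) = h i := by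
  obtain ⟨i₀, hi₀, hmin⟩ := exists_min_image D h hD hne
  obtain ⟨i, ⟨hi, hle⟩, hmax⟩ := exists_max_image {i ∈ D | h i ≤ h (φ i)} h (hD.sep _)
    ⟨i₀, hi₀, hmin _ (hφ hi₀)⟩
  exact ⟨i, hi, (hmax _ ⟨hφ hi, hmono _ hi _ (hφ hi) hle⟩).antisymm hle⟩

variable {α : Type*} [LinearOrder α] {c : α} {w : ℕ → α} {k m N : ℕ} {i j : ℕ}

/-- The excess, scaled by `k`, of the number of crossings of `c` during the first `j` steps of `w`
over the number expected at the rate of `2 * m` crossings in `k` steps. -/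
def height (c : α) (w : ℕ → α) (k m j : ℕ) : ℤ := k * crossings c w j - 2 * m * j

theorem height_succ (c : α) (w : ℕ → α) (k m j : ℕ) :
    height c w k m (j + 1) =
      height c w k m j + (if (w j < c ↔ w (j + 1) < c) then 0 else (k : ℤ)) - 2 * m := by
  simp only [height, crossings_succ]
  split_ifs <;> push_cast <;> ring

theorem lt_iff_lt_of_height_eq (hk : 0 < k) (hmod : i ≡ j [MOD k])
    (hh : height c w k m i = height c w k m j) : w i < c ↔ w j < c := by
  obtain ⟨t, ht⟩ := hmod.dvd
  have hcross : (crossings c w j : ℤ) - crossings c w i = 2 * m * t := by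
    refine mul_left_cancel₀ (Int.natCast_ne_zero.2 hk.ne') ?_
    simp only [height] at hh
    linear_combination (2 * m : ℤ) * ht - hh
  have hparity : Even (crossings c w i) ↔ Even (crossings c w j) := by
    have heven : Even ((crossings c w j : ℤ) - crossings c w i) := hcross ▸ ⟨m * t, by ring⟩
    rw [Int.even_sub, Int.even_coe_nat, Int.even_coe_nat] at heven
    exact heven.symm
  rw [even_crossings_iff, even_crossings_iff] at hparity
  tauto

theorem height_add_le_of_lt (hmod : i ≡ j [MOD k])
    (hlt : height c w k m i < height c w k m j) :
    height c w k m i + k ≤ height c w k m j := by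
  obtain ⟨t, ht⟩ := hmod.dvd
  have hdvd : (k : ℤ) ∣ height c w k m j - height c w k m i := by
    refine ⟨crossings c w j - crossings c w i - 2 * m * t, ?_⟩
    simp only [height]
    linear_combination (-2 * m : ℤ) * ht
  linarith [Int.le_of_dvd (sub_pos.2 hlt) hdvd]

theorem height_add_of_periodic (hw : w.Periodic N) (hN : height c w k m N = 0) (j : ℕ) :
    height c w k m (N + j) = height c w k m j := by
  have hshift : (fun i => w (N + i)) = w := funext fun i => by rw [add_comm, hw]
  simp only [height, crossings_add, hshift] at hN ⊢
  push_cast at hN ⊢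
  linear_combination hN

/-- `s` selects from every class of indices with equal height and equal residue modulo `k` one
index below `N` at which `w` comes closest to `c`. -/
structure IsNearestSelector (c : α) (w : ℕ → α) (k m N : ℕ) (s : ℕ → ℕ) : Prop where
  lt : ∀ j, s j < N
  modEq : ∀ j, s j ≡ j [MOD k]
  height_eq : ∀ j, height c w k m (s j) = height c w k m j
  eq_of_height_eq : ∀ i j, i ≡ j [MOD k] → height c w k m i = height c w k m j → s i = s j
  mem_uIcc : ∀ j, w (s j) ∈ uIcc (w j) c

theorem exists_isNearestSelector (hw : w.Periodic N) (hN : 0 < N) (hk : 0 < k) (hkN : k ∣ N)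
    (hh : height c w k m N = 0) : ∃ s, IsNearestSelector c w k m N s := by
  have hheight : (height c w k m).Periodic N := fun j => by
    rw [add_comm, height_add_of_periodic hw hh]
  have hclass (r : ℕ) (a : ℤ) : ∃ i, ∀ j, j % k = r → height c w k m j = a →
      i < N ∧ i % k = r ∧ height c w k m i = a ∧ w i ∈ uIcc (w j) c := by
    set C : Set ℕ := {i | i < N ∧ i % k = r ∧ height c w k m i = a}
    have hmem {j : ℕ} (hj : j % k = r) (ha : height c w k m j = a) : j % N ∈ C :=
      ⟨j.mod_lt hN, (Nat.mod_mod_of_dvd j hkN).trans hj, (hheight.map_mod_nat j).trans ha⟩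
    rcases C.eq_empty_or_nonempty with hC | hC
    · exact ⟨0, fun j hj ha => absurd (hmem hj ha) (hC ▸ notMem_empty _)⟩
    · obtain ⟨_, ⟨i, hi, rfl⟩, hnear⟩ := exists_nearest (c := c)
        (((finite_lt_nat N).subset fun i hi => hi.1).image w) (hC.image w) (by
          rintro _ ⟨i, hi, rfl⟩ _ ⟨j, hj, rfl⟩
          exact lt_iff_lt_of_height_eq hk (hi.2.1.trans hj.2.1.symm) (hi.2.2.trans hj.2.2.symm))
      refine ⟨i, fun j hj ha => ⟨hi.1, hi.2.1, hi.2.2, ?_⟩⟩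
      exact hw.map_mod_nat j ▸ hnear _ (mem_image_of_mem w (hmem hj ha))
  choose g hg using hclass
  have hs (j : ℕ) := hg (j % k) (height c w k m j) j rfl rfl
  exact ⟨fun j => g (j % k) (height c w k m j), fun j => (hs j).1, fun j => (hs j).2.1,
    fun j => (hs j).2.2.1, fun i j hij hh => congrArg₂ g hij hh, fun j => (hs j).2.2.2⟩

namespace IsNearestSelector

variable {s : ℕ → ℕ}

theorem height_succ_le (hs : IsNearestSelector c w k m N s) (hij : i ≡ j [MOD k])
    (hh : height c w k m i ≤ height c w k m j) :
    height c w k m (s i + 1) ≤ height c w k m (s j + 1) := by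
  rcases hh.lt_or_eq with hlt | heq
  · have hgap := height_add_le_of_lt hij hlt
    rw [height_succ, height_succ, hs.height_eq, hs.height_eq]
    split_ifs <;> linarith [Int.natCast_nonneg k]
  · rw [hs.eq_of_height_eq i j hij heq]

theorem iterate_modEq (hs : IsNearestSelector c w k m N s) (j t : ℕ) :
    (fun i => s i + 1)^[t] j ≡ j + t [MOD k] := by
  induction t with
  | zero => rfl
  | succ t ih =>
    rw [iterate_succ_apply']
    exact ((hs.modEq _).trans ih).add_right 1

theorem exists_height_iterate_eq (hs : IsNearestSelector c w k m N s) (hk : 0 < k) :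
    ∃ j, height c w k m ((fun i => s i + 1)^[k] j) = height c w k m j := by
  set σ : ℕ → ℕ := fun i => s i + 1
  have hmono (t : ℕ) {i j : ℕ} (hij : i ≡ j [MOD k]) (hh : height c w k m i ≤ height c w k m j) :
      height c w k m (σ^[t] i) ≤ height c w k m (σ^[t] j) := by
    induction t with
    | zero => exact hh
    | succ t ih =>
      rw [iterate_succ_apply', iterate_succ_apply']
      exact hs.height_succ_le
        ((hs.iterate_modEq i t).trans ((hij.add_right t).trans (hs.iterate_modEq j t).symm)) ih
  have hmaps : MapsTo σ^[k] {j | j ≤ N ∧ k ∣ j} {j | j ≤ N ∧ k ∣ j} := by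
    rintro j ⟨-, hj⟩
    refine ⟨?_, ?_⟩
    · obtain ⟨t, rfl⟩ := Nat.exists_eq_add_of_lt hk
      rw [iterate_succ_apply']
      exact hs.lt _
    · have hmod : σ^[k] j ≡ j + k [MOD k] := hs.iterate_modEq j k
      exact (hmod.dvd_iff dvd_rfl).2 (hj.add (dvd_refl k))
  obtain ⟨j, -, hj⟩ := exists_apply_eq_of_monotoneOn (h := height c w k m)
    ((finite_le_nat N).subset fun _ => And.left) ⟨0, N.zero_le, dvd_zero k⟩ hmaps
    fun i hi j hj => hmono k (((Nat.modEq_zero_iff_dvd).2 hi.2).trans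
      ((Nat.modEq_zero_iff_dvd).2 hj.2).symm)
  exact ⟨j, hj⟩

theorem height_iterate (hs : IsNearestSelector c w k m N s) (hk : 0 < k) (j t : ℕ) :
    height c w k m ((fun i => s i + 1)^[t] j) = height c w k m j +
      k * crossings c (fun i => w (s ((fun i => s i + 1)^[i] j))) t - 2 * m * t := by
  induction t with
  | zero => simp [crossings_zero]
  | succ t ih =>
    have hside (i : ℕ) : w (s i) < c ↔ w i < c :=
      lt_iff_lt_of_height_eq hk (hs.modEq i) (hs.height_eq i)
    simp only [crossings_succ, iterate_succ_apply', hside (_ + 1)]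
    rw [height_succ, hs.height_eq, ih]
    split_ifs <;> push_cast <;> ring

theorem exists_closed_walk (hs : IsNearestSelector c w k m N s) (hk : 0 < k) :
    ∃ i : ℕ → ℕ, i k = i 0 ∧ crossings c (fun t => w (i t)) k = 2 * m ∧
      (∀ t, w (i (t + 1)) ∈ uIcc (w (i t + 1)) c) ∧
      ∀ j, j ≡ i 0 [MOD k] → height c w k m j = height c w k m (i 0) → w (i 0) ∈ uIcc (w j) c := by
  obtain ⟨j, hj⟩ := hs.exists_height_iterate_eq hk
  have hmod : (fun i => s i + 1)^[k] j ≡ j [MOD k] := by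
    simpa [Nat.ModEq] using hs.iterate_modEq j k
  refine ⟨fun t => s ((fun i => s i + 1)^[t] j), hs.eq_of_height_eq _ _ hmod hj, ?_, fun t => ?_,
    fun i hi hh => ?_⟩
  · have hwalk := hs.height_iterate hk j k
    rw [hj] at hwalk
    refine Nat.eq_of_mul_eq_mul_left hk (Nat.cast_injective (R := ℤ) ?_)
    push_cast
    linarith
  · beta_reduce
    rw [iterate_succ_apply']
    exact hs.mem_uIcc _
  · have hsi : s i = s j := hs.eq_of_height_eq i j (hi.trans (hs.modEq j))
      (hh.trans (hs.height_eq j))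
    exact (hsi ▸ hs.mem_uIcc i : w (s j) ∈ uIcc (w i) c)

end IsNearestSelector

end Height

section CrossingCycle

variable {α : Type*} [ConditionallyCompleteLinearOrder α] [TopologicalSpace α] [OrderTopology α]
  [DenselyOrdered α] {f : α → α} {c x : α} {J S : Set α} {k l m n : ℕ}

/-- `f` has a cycle of period `q` through a point of `J` other than `c` which crosses `c` exactly
`μ` times. -/
def HasCrossingCycle {α : Type*} [LinearOrder α] (f : α → α) (J : Set α) (c : α) (μ q : ℕ) : Prop :=
  ∃ y ∈ J, y ≠ c ∧ minimalPeriod f y = q ∧ crossings c (f^[·] y) q = μ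

theorem returnMap_iterate_eq_or {α : Type*} [LinearOrder α] (f : α → α) (c x : α) (k m j : ℕ) :
    returnMap f c k (2 * m) (f^[j] x) = c ∨
      returnMap f c k (2 * m) (f^[j] x) = f^[j + k] x ∧
        height c (f^[·] x) k m (j + k) = height c (f^[·] x) k m j := by
  refine or_iff_not_imp_left.2 fun hne => ?_
  have hcross := crossings_eq_of_returnMap_ne hne
  refine ⟨?_, ?_⟩
  · rw [returnMap_of_crossings_eq hcross, add_comm, iterate_add_apply]
  · rw [height, height, crossings_orbit_add, hcross]
    push_cast
    ring

theorem exists_isRepellingSet_returnMap (hf : ContinuousOn f J) (hfJ : MapsTo f J J)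
    (hJ : J.OrdConnected) (hcJ : c ∈ J) (hc : IsFixedPt f c) (hk : 0 < k) (hn : 0 < n)
    (hx : x ∈ J) (hxc : x ≠ c) (hper : IsPeriodicPt f (k * n) x)
    (hcross : crossings c (f^[·] x) (k * n) = 2 * (m * n)) :
    ∃ S ⊆ range (f^[·] x), IsRepellingSet (returnMap f c k (2 * m)) c S := by
  set X : ℕ → α := (f^[·] x) with hX
  have hperX : X.Periodic (k * n) := fun i => by
    simp only [hX, iterate_add_apply, hper.eq]
  have hheight : height c X k m (k * n) = 0 := by
    rw [height, hcross]
    push_cast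
    ring
  have hkn : 0 < k * n := Nat.mul_pos hk hn
  have hx_per : x ∈ periodicPts f := ⟨k * n, hkn, hper⟩
  have hXc (i : ℕ) : X i ≠ c := iterate_ne_of_mem_periodicPts hc hx_per hxc i
  obtain ⟨s, hs⟩ := exists_isNearestSelector hperX hkn hk ⟨n, rfl⟩ hheight
  obtain ⟨i, hloop, hcross_walk, hstep, hnear⟩ := hs.exists_closed_walk hk
  refine ⟨X '' {j | j ≡ i 0 [MOD k] ∧ height c X k m j = height c X k m (i 0)},
    image_subset_range X _, ?_, ?_, ?_, ?_, ?_⟩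
  · exact (isCycle_range_iterate hx_per).finite.subset (image_subset_range X _)
  · rintro ⟨j, -, hj⟩
    exact hXc j hj
  · rintro _ ⟨j, hj, rfl⟩ _ ⟨j', hj', rfl⟩
    exact lt_iff_lt_of_height_eq hk (hj.1.trans hj'.1.symm) (hj.2.trans hj'.2.symm)
  · rintro _ ⟨j, hj, rfl⟩
    rcases returnMap_iterate_eq_or f c x k m j with h | ⟨h, hh⟩
    · exact Or.inl h
    · exact Or.inr ⟨j + k, ⟨Nat.add_modEq_right.trans hj.1, hh.trans hj.2⟩, h.symm⟩
  · refine ⟨X (i 0), ⟨i 0, ⟨rfl, rfl⟩, rfl⟩, ?_, ?_⟩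
    · rintro _ ⟨j, hj, rfl⟩
      exact hnear j hj.1 hj.2
    · have hXJ (j : ℕ) : X j ∈ J := hfJ.iterate j hx
      have hwalk := exists_mem_uIcc_returnMap_eq (k := k) (W := fun t => X (i t))
        (fun t _ => hf.mono (hJ.uIcc_subset (hXJ (i t)) hcJ)) hc
        (fun t _ => by simpa only [hX, iterate_succ_apply'] using hstep t) (hXc _)
      rwa [hcross_walk, hloop] at hwalk

theorem HasCrossingCycle.of_sharkLt (h : HasCrossingCycle f J c (2 * (m * n)) (k * n))
    (hln : SharkLt l n) (hl : 0 < l) (hn : 0 < n) (hk : 0 < k) (hmk : m.Coprime k)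
    (hf : ContinuousOn f J) (hfJ : MapsTo f J J) (hJ : J.OrdConnected) (hcJ : c ∈ J)
    (hc : IsFixedPt f c) : HasCrossingCycle f J c (2 * (m * l)) (k * l) := by
  obtain ⟨x, hxJ, hxc, hper, hcross⟩ := h
  obtain ⟨S, hSx, hS⟩ := exists_isRepellingSet_returnMap hf hfJ hJ hcJ hc hk hn hxJ hxc
    (hper ▸ isPeriodicPt_minimalPeriod f x) hcross
  have hSJ : S ⊆ J := hSx.trans (range_subset_iff.2 fun i => hfJ.iterate i hxJ)
  set T := returnMap f c k (2 * m)
  have hT : ContinuousOn T J := continuousOn_returnMap hf hfJ hc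
  have hTc : IsFixedPt T c := isFixedPt_returnMap hc
  suffices hy : ∃ y ∈ J, y ≠ c ∧ minimalPeriod T y = l by
    obtain ⟨y, hyJ, hyc, hy⟩ := hy
    obtain ⟨hper, hcross⟩ := minimalPeriod_of_minimalPeriod_returnMap hc hmk hyc hy hl
    exact ⟨y, hyJ, hyc, hper, hcross.trans (mul_assoc 2 m l)⟩
  by_cases hU : ∀ U ⊆ S, U.Nonempty → ¬MapsTo T U U
  · exact hS.exists_minimalPeriod_eq hT hJ hSJ hcJ hTc hU hl
  push Not at hU
  obtain ⟨U, hUS, ⟨p, hp⟩, hmaps⟩ := hU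
  obtain ⟨i, rfl⟩ := hSx (hUS hp)
  have hx_per : x ∈ periodicPts f :=
    minimalPeriod_pos_iff_mem_periodicPts.1 (hper ▸ Nat.mul_pos hk hn)
  have hTn : HasPeriod T J n := by
    refine ⟨_, hSJ (hUS hp), ?_⟩
    rw [minimalPeriod_returnMap hc fun a h => hS.notMem (h ▸ hUS (hmaps.iterate a hp)),
      minimalPeriod_iterate_eq_div_gcd hk.ne', minimalPeriod_apply_iterate hx_per, hper,
      Nat.gcd_mul_right_left, Nat.mul_div_cancel_left _ hk]
  rcases eq_or_ne l 1 with rfl | hl1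
  · obtain ⟨y, hyJ, hyc, hy⟩ := hS.exists_isFixedPt hT hJ hSJ hcJ hTc
    exact ⟨y, hyJ, hyc, minimalPeriod_eq_one_iff_isFixedPt.2 hy⟩
  · obtain ⟨y, hyJ, hy⟩ := hTn.of_sharkLt hln hl hn hT (mapsTo_returnMap hfJ hcJ) hJ
    refine ⟨y, hyJ, ?_, hy⟩
    rintro rfl
    exact hl1 (hy.symm.trans (minimalPeriod_eq_one_iff_isFixedPt.2 hTc))

end CrossingCycle

section Horseshoe

/-- Two fixed points `c < e` of `g`, a point `x` below `c` sent to `e`, and a point `t` between `c`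
and `e` sent to `x` or below. Orbits may then linger in `[c, e]` between two crossings of `c`. -/
structure IsHorseshoe {α : Type*} [LinearOrder α] (g : α → α) (x c t e : α) : Prop where
  left_lt : x < c
  lt_return : c < t
  return_lt : t < e
  isFixedPt_center : IsFixedPt g c
  isFixedPt_right : IsFixedPt g e
  apply_left : g x = e
  apply_return_le : g t ≤ x

theorem crossings_eq_min {α : Type*} [LinearOrder α] {c : α} {w : ℕ → α} {j n : ℕ} (hj : Odd j)
    (h : ∀ i ≤ n, w i < c ↔ Even i ∧ i < j) : crossings c w n = min n j := by
  induction n with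
  | zero => simp [crossings_zero]
  | succ n ih =>
    rw [crossings_succ, ih fun i hi => h i (hi.trans n.le_succ)]
    simp only [h n n.le_succ, h (n + 1) le_rfl]
    grind

namespace IsHorseshoe

theorem returnMap_left {α : Type*} [LinearOrder α] {g : α → α} {c e t x : α} {k m : ℕ}
    (h : IsHorseshoe g x c t e) (hk : 0 < k) :
    returnMap g c k (2 * m) x = c := by
  obtain ⟨k, rfl⟩ := Nat.exists_eq_add_one_of_ne_zero hk.ne'
  by_contra hne
  have hsame := (lt_iff_lt_of_returnMap_ne (even_two_mul m) hne).1 h.left_lt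
  rw [returnMap_of_crossings_eq (crossings_eq_of_returnMap_ne hne), iterate_succ_apply,
    h.apply_left, (h.isFixedPt_right.iterate k).eq] at hsame
  exact hsame.not_gt (h.lt_return.trans h.return_lt)

variable {α : Type*} [ConditionallyCompleteLinearOrder α] [TopologicalSpace α] [OrderTopology α]
  [DenselyOrdered α] {g : α → α} {c e t x : α} {J : Set α} {j k l m : ℕ}

theorem surjOn_left_right (h : IsHorseshoe g x c t e) (hg : ContinuousOn g (Icc x e)) :
    SurjOn g (Icc x c) (Icc c e) := by
  have hce := h.lt_return.trans h.return_lt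
  have := intermediate_value_Icc' h.left_lt.le (hg.mono (Icc_subset_Icc_right hce.le))
  rwa [h.isFixedPt_center, h.apply_left] at this

theorem surjOn_right_left (h : IsHorseshoe g x c t e) (hg : ContinuousOn g (Icc x e)) :
    SurjOn g (Icc c e) (Icc x c) := by
  have := intermediate_value_Icc' h.lt_return.le
    (hg.mono (Icc_subset_Icc h.left_lt.le h.return_lt.le))
  rw [h.isFixedPt_center] at this
  exact (Icc_subset_Icc_left h.apply_return_le).trans
    (this.trans (image_mono (Icc_subset_Icc_right h.return_lt.le)))

theorem surjOn_right_right (h : IsHorseshoe g x c t e) (hg : ContinuousOn g (Icc x e)) :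
    SurjOn g (Icc c e) (Icc c e) := by
  have := intermediate_value_Icc h.return_lt.le
    (hg.mono (Icc_subset_Icc_left (h.left_lt.trans h.lt_return).le))
  rw [h.isFixedPt_right] at this
  exact (Icc_subset_Icc_left (h.apply_return_le.trans h.left_lt.le)).trans
    (this.trans (image_mono (Icc_subset_Icc_left h.lt_return.le)))

theorem exists_iterate_eq_crossings_eq (h : IsHorseshoe g x c t e) (hg : ContinuousOn g (Icc x e))
    (hj : Odd j) (hjk : j ≤ k) :
    ∃ z ∈ Icc x c, g^[k] z = t ∧ crossings c (g^[·] z) k = j := by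
  set K : ℕ → Set α := fun i => if Even i ∧ i < j then Icc x c else Icc c e with hK
  have hcover (i : ℕ) : SurjOn g (K i) (K (i + 1)) := by
    simp only [hK]
    split_ifs with hi hi'
    · grind
    · exact h.surjOn_left_right hg
    · exact h.surjOn_right_left hg
    · exact h.surjOn_right_right hg
  have htK : t ∈ K k := by
    simp only [hK, hjk.not_gt, and_false, if_false]
    exact ⟨h.lt_return.le, h.return_lt.le⟩
  obtain ⟨z, hz, hzt⟩ := exists_itinerary (fun i _ => hcover i) htK
  refine ⟨z, ?_, hzt, ?_⟩
  · have hz0 := hz 0 k.zero_le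
    simp only [hK, Even.zero, hj.pos, and_self, if_true] at hz0
    exact hz0
  · rw [crossings_eq_min hj fun i hi => ?_, min_eq_right hjk]
    have hne : g^[i] z ≠ c :=
      iterate_ne_of_le h.isFixedPt_center hi (hzt.trans_ne h.lt_return.ne')
    have hzi := hz i hi
    simp only [hK] at hzi
    split_ifs at hzi with hij
    · exact iff_of_true (hzi.2.lt_of_ne hne) hij
    · exact iff_of_false hzi.1.not_gt hij

theorem exists_returnMap_le (h : IsHorseshoe g x c t e) (hg : ContinuousOn g (Icc x e))
    (hm : 0 < m) (hmk : 2 * m ≤ k) : ∃ z ∈ Icc x c, returnMap g c k (2 * m) z ≤ x := by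
  obtain ⟨j, hj⟩ : ∃ j, 2 * m = j + 1 := ⟨2 * m - 1, by omega⟩
  obtain ⟨k, rfl⟩ : ∃ k', k = k' + 1 := ⟨k - 1, by omega⟩
  obtain ⟨z, hz, hzt, hcross⟩ := h.exists_iterate_eq_crossings_eq (j := j) (k := k) hg
    (by rw [Nat.odd_iff]; omega) (by omega)
  have hzk : g^[k + 1] z = g t := by rw [iterate_succ_apply', hzt]
  refine ⟨z, hz, ?_⟩
  rw [returnMap_of_crossings_eq, hzk]
  · exact h.apply_return_le
  · rw [crossings_succ, hcross, hzt, hzk, hj, if_neg]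
    exact fun hiff => h.lt_return.not_gt (hiff.2 (h.apply_return_le.trans_lt h.left_lt))

theorem hasCrossingCycle (h : IsHorseshoe g x c t e) (hg : ContinuousOn g J) (hgJ : MapsTo g J J)
    (hJ : J.OrdConnected) (hxJ : x ∈ J) (heJ : e ∈ J) (hm : 0 < m) (hmk : m.Coprime k)
    (hmk_le : 2 * m ≤ k) (hl : 0 < l) : HasCrossingCycle g J c (2 * (m * l)) (k * l) := by
  have hcJ : c ∈ J := hJ.out hxJ heJ ⟨h.left_lt.le, (h.lt_return.trans h.return_lt).le⟩
  obtain ⟨z, hz, hzx⟩ := h.exists_returnMap_le (hg.mono (hJ.out hxJ heJ)) hm hmk_le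
  have hT : ContinuousOn (returnMap g c k (2 * m)) (uIcc x c) :=
    (continuousOn_returnMap hg hgJ h.isFixedPt_center).mono (hJ.uIcc_subset hxJ hcJ)
  obtain ⟨y, hy, hyc, hper⟩ := exists_minimalPeriod_eq_of_horseshoe hT
    (h.returnMap_left (by omega)) (isFixedPt_returnMap h.isFixedPt_center) h.left_lt.ne
    (Icc_subset_uIcc hz) (mem_uIcc_of_le hzx h.left_lt.le) hl
  obtain ⟨hper, hcross⟩ :=
    minimalPeriod_of_minimalPeriod_returnMap h.isFixedPt_center hmk hyc hper hl
  exact ⟨y, hJ.uIcc_subset hxJ hcJ hy, hyc, hper, hcross.trans (mul_assoc 2 m l)⟩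

end IsHorseshoe

theorem IsCycle.exists_lt_apply_le {α : Type*} [LinearOrder α] {f : α → α} {P : Set α}
    {a b c e : α} (hP : IsCycle f P) (hcP : c ∉ P) (heP : e ∉ P) (ha : a ∈ P) (hca : c < a)
    (hae : a < e) (hb : b ∈ P) (heb : e < b) (hup : ∀ p ∈ P, p < c → p < f p)
    (hdown : ∀ p ∈ P, c < p → p < e → f p < p) :
    ∃ x ∈ P, x < c ∧ e < f x ∧ ∃ t, c < t ∧ t < e ∧ f t ≤ x := by
  have hside {p : α} (hp : p ∈ P) : p < c ∨ c < p := lt_or_gt_of_ne fun h => hcP (h ▸ hp)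
  have hlt {p : α} (hp : p ∈ P) (h : ¬e < f p) : f p < e :=
    (not_lt.1 h).lt_of_ne fun h => heP (h ▸ hP.mapsTo hp)
  obtain ⟨x, ⟨hxP, hxc, hxe⟩, hx⟩ :
      ∃ x ∈ {p ∈ P | p < c ∧ e < f p}, ∀ p ∈ {p ∈ P | p < c ∧ e < f p}, p ≤ x := by
    refine exists_max_image _ id (hP.finite.sep _) ?_
    by_contra hempty
    refine (hP.forall_of_forall_apply (Q := (· < e)) (fun p hp hpe => ?_) ha hae b hb).not_gt heb
    rcases hside hp with hpc | hcp
    · exact hlt hp fun h => hempty ⟨p, hp, hpc, h⟩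
    · exact (hdown p hp hcp hpe).trans hpe
  refine ⟨x, hxP, hxc, hxe, ?_⟩
  by_contra! hreturn
  refine (hP.forall_of_forall_apply (Q := fun p => x < p ∧ p < e) (fun p hp ⟨hxp, hpe⟩ => ?_) ha
    ⟨hxc.trans hca, hae⟩ b hb).2.not_gt heb
  rcases hside hp with hpc | hcp
  · exact ⟨hxp.trans (hup p hp hpc), hlt hp fun h => hxp.not_ge (hx p ⟨hp, hpc, h⟩)⟩
  · exact ⟨hreturn p hcp hpe, (hdown p hp hcp hpe).trans hpe⟩

variable {α : Type*} [ConditionallyCompleteLinearOrder α] [TopologicalSpace α] [OrderTopology α]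
  [DenselyOrdered α] {f : α → α} {P J : Set α} {c q u v : α}

theorem IsCentral.exists_isHorseshoe (h : IsCentral f P u c v) (hP : IsCycle f P)
    (hup : ∀ p ∈ P, p < c → p < f p) (hq : q ∈ P) (hcq : c < q) (hqf : q < f q)
    (hf : ContinuousOn f J) (hJ : J.OrdConnected) (hPJ : P ⊆ J) :
    ∃ x ∈ J, ∃ e ∈ J, ∃ t, IsHorseshoe f x c t e := by
  have hnt : P.Nontrivial := ⟨u, h.left_mem, v, h.right_mem, (h.left_lt.trans h.lt_right).ne⟩
  have hvq : v ≤ q := (h.le_or_le q hq).resolve_left (h.left_lt.trans hcq).not_ge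
  obtain ⟨a, haP, b, hbP, hva, hab, -, hAb, hgap, hA⟩ := exists_consecutive hP.finite
    (A := fun r => f r < r) h.right_mem hq hvq
    (h.apply_right_le.trans_lt (h.left_lt.trans h.lt_right)) hqf.not_gt
  have hb : b < f b := (not_lt.1 hAb).lt_of_ne (hP.apply_ne hnt hbP).symm
  have ha : f a < a := hA a haP hva le_rfl
  obtain ⟨e, heab, he⟩ : ∃ e ∈ uIcc b a, IsFixedPt f e :=
    exists_mem_uIcc_isFixedPt (hf.mono (hJ.uIcc_subset (hPJ hbP) (hPJ haP))) hb.le ha.le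
  have heJ : e ∈ J := hJ.uIcc_subset (hPJ hbP) (hPJ haP) heab
  have heP : e ∉ P := fun heP => hP.apply_ne hnt heP he
  rw [uIcc_of_ge hab.le] at heab
  have hae : a < e := heab.1.lt_of_ne fun hae => heP (hae ▸ haP)
  have heb : e < b := heab.2.lt_of_ne fun heb => heP (heb ▸ hbP)
  have hca : c < a := h.lt_right.trans_le hva
  obtain ⟨x, hxP, hxc, hxe, t, hct, hte, htx⟩ := hP.exists_lt_apply_le
    (fun hcP => h.ne hcP rfl) heP haP hca hae hbP heb hup fun p hp hcp hpe =>
      hA p hp ((h.le_or_le p hp).resolve_left (h.left_lt.trans hcp).not_ge)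
        ((hgap p hp).resolve_right (hpe.trans heb).not_ge)
  have hxc_sub : Icc x c ⊆ J := hJ.out (hPJ hxP) (h.mem hJ hPJ)
  obtain ⟨x', hx', hx'e⟩ := intermediate_value_Icc' hxc.le (hf.mono hxc_sub)
    ⟨h.isFixedPt.le.trans (hct.trans hte).le, hxe.le⟩
  refine ⟨x', hxc_sub hx', e, heJ, t, hx'.2.lt_of_ne ?_, hct, hte, h.isFixedPt, he, hx'e,
    htx.trans hx'.1⟩
  rintro rfl
  exact (hca.trans hae).ne (h.isFixedPt.symm.trans hx'e)

end Horseshoe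

section Clip

/-- The map `f` with every displacement away from the side of `c` suppressed: below `c` points only
move up, above `c` they only move down, and points violating this are frozen. For a map of this kind
the sign of `f x - x` tells on which side of `c` the point `x` lies. -/
def clip {α : Type*} [LinearOrder α] (f : α → α) (c x : α) : α :=
  if x < c then max (f x) x else min (f x) x

variable {α : Type*} [LinearOrder α] {f : α → α} {c e t x : α} {J : Set α}

theorem clip_of_lt_iff_lt (h : x < c ↔ x < f x) : clip f c x = f x := by
  rw [clip]
  split_ifs with hx
  · exact max_eq_left (h.1 hx).le
  · exact min_eq_left (not_lt.1 (mt h.2 hx))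

theorem lt_iff_lt_of_clip_ne (h : clip f c x ≠ x) : x < c ↔ x < f x := by
  rw [clip] at h
  split_ifs at h with hx
  · exact iff_of_true hx (not_le.1 (mt max_eq_right h))
  · exact iff_of_false hx (not_le.1 (mt min_eq_right h)).not_gt

theorem isFixedPt_clip (hx : IsFixedPt f x) : IsFixedPt (clip f c) x := by
  rw [IsFixedPt, clip, hx, max_self, min_self, ite_self]

theorem mapsTo_clip (hf : MapsTo f J J) : MapsTo (clip f c) J J := fun x hx => by
  rw [clip]
  split_ifs
  exacts [max_rec' (· ∈ J) (hf hx) hx, min_rec' (· ∈ J) (hf hx) hx]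

theorem continuousOn_clip [TopologicalSpace α] [OrderTopology α] (hf : ContinuousOn f J)
    (hc : IsFixedPt f c) : ContinuousOn (clip f c) J := by
  refine ContinuousOn.if (fun x hx => ?_) ?_ ?_
  · have hxc : x = c := frontier_lt_subset_eq continuous_id continuous_const hx.2
    rw [hxc, hc, max_self, min_self]
  · exact (hf.sup continuousOn_id).mono inter_subset_left
  · exact (hf.inf continuousOn_id).mono inter_subset_left

theorem IsHorseshoe.clip (h : IsHorseshoe f x c t e) : IsHorseshoe (clip f c) x c t e where
  __ := h
  isFixedPt_center := isFixedPt_clip h.isFixedPt_center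
  isFixedPt_right := isFixedPt_clip h.isFixedPt_right
  apply_left := by
    refine (clip_of_lt_iff_lt (iff_of_true h.left_lt ?_)).trans h.apply_left
    exact h.apply_left ▸ (h.left_lt.trans h.lt_return).trans h.return_lt
  apply_return_le := by
    refine (clip_of_lt_iff_lt (iff_of_false h.lt_return.not_gt ?_)).trans_le h.apply_return_le
    exact (h.apply_return_le.trans (h.left_lt.trans h.lt_return).le).not_gt

end Clip

section OverRotation

theorem iterate_eq_of_forall_apply_eq {α : Type*} {f g : α → α} {x : α}
    (h : ∀ i, g (f^[i] x) = f (f^[i] x)) (n : ℕ) : g^[n] x = f^[n] x := by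
  induction n with
  | zero => rfl
  | succ n ih => rw [iterate_succ_apply', ih, h, iterate_succ_apply']

theorem minimalPeriod_eq_of_forall_apply_eq {α : Type*} {f g : α → α} {x : α}
    (h : ∀ i, g (f^[i] x) = f (f^[i] x)) : minimalPeriod g x = minimalPeriod f x :=
  minimalPeriod_eq_minimalPeriod_iff.2 fun n => by
    rw [IsPeriodicPt, IsPeriodicPt, IsFixedPt, IsFixedPt, iterate_eq_of_forall_apply_eq h]

theorem apply_iterate_ne {α : Type*} {f : α → α} {x : α} (hx : x ∈ periodicPts f)
    (h : minimalPeriod f x ≠ 1) (i : ℕ) : f (f^[i] x) ≠ f^[i] x :=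
  (isCycle_range_iterate hx).apply_ne (nontrivial_range_iterate h) ⟨i, rfl⟩

variable {f : ℝ → ℝ} {J : Set ℝ} {c x : ℝ} {k l m n p q r s : ℕ}

theorem overCount_le (f : ℝ → ℝ) (x : ℝ) (q : ℕ) : overCount f x q ≤ q :=
  (Finset.card_filter_le _ _).trans_eq (Finset.card_range q)

theorem overCount_eq_crossings (hne : ∀ i, f (f^[i] x) ≠ f^[i] x)
    (hc : ∀ i, f^[i] x < c ↔ f^[i] x < f (f^[i] x)) (q : ℕ) :
    overCount f x q = crossings c (f^[·] x) q := by
  refine congrArg Finset.card (Finset.filter_congr fun i _ => ?_)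
  have := (hne i).lt_or_gt
  have := (hne (i + 1)).lt_or_gt
  rw [mul_neg_iff, hc i, hc (i + 1), sub_pos, sub_neg, sub_pos, sub_neg]
  grind

theorem HasCrossingCycle.hasOverPair (h : HasCrossingCycle (clip f c) J c (2 * p) q) (hq : 0 < q)
    (hq1 : q ≠ 1) : HasOverPair f J p q := by
  obtain ⟨x, hxJ, -, hper, hcross⟩ := h
  have hclip := apply_iterate_ne (minimalPeriod_pos_iff_mem_periodicPts.1 (hper ▸ hq)) (hper ▸ hq1)
  have hside (i : ℕ) := lt_iff_lt_of_clip_ne (hclip i)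
  have heq (i : ℕ) := (clip_of_lt_iff_lt (hside i)).symm
  have horbit := iterate_eq_of_forall_apply_eq heq
  have hne (i : ℕ) := (heq i).trans_ne (hclip i)
  simp only [← horbit] at hne hside hcross
  exact ⟨x, hxJ, (minimalPeriod_eq_of_forall_apply_eq heq).trans hper,
    (overCount_eq_crossings hne hside q).trans hcross⟩

theorem hasCrossingCycle_clip (hxJ : x ∈ J) (hxc : x ≠ c) (hne : ∀ i, f (f^[i] x) ≠ f^[i] x)
    (hside : ∀ i, f^[i] x < c ↔ f^[i] x < f (f^[i] x)) :
    HasCrossingCycle (clip f c) J c (overCount f x (minimalPeriod f x)) (minimalPeriod f x) := by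
  have heq (i : ℕ) : clip f c (f^[i] x) = f (f^[i] x) := clip_of_lt_iff_lt (hside i)
  refine ⟨x, hxJ, hxc, minimalPeriod_eq_of_forall_apply_eq heq, ?_⟩
  simp only [iterate_eq_of_forall_apply_eq heq, overCount_eq_crossings hne hside]

theorem HasOverPair.of_sharkLt (h : HasOverPair f J (m * n) (k * n)) (hln : SharkLt l n)
    (hm : 0 < m) (hl : 0 < l) (hn : 0 < n) (hmk : m.Coprime k) (hf : ContinuousOn f J)
    (hfJ : MapsTo f J J) (hJ : J.OrdConnected) : HasOverPair f J (m * l) (k * l) := by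
  obtain ⟨x, hxJ, hper, hcount⟩ := h
  have hmk_le : 2 * m ≤ k := by
    have hle := overCount_le f x (k * n)
    rw [hcount, ← mul_assoc] at hle
    exact Nat.le_of_mul_le_mul_right hle hn
  have hk : 2 ≤ k := by omega
  have hx : x ∈ periodicPts f := minimalPeriod_pos_iff_mem_periodicPts.1 (by rw [hper]; positivity)
  have hne_one {i : ℕ} : k * i ≠ 1 := fun h => by have := Nat.eq_one_of_mul_eq_one_right h; omega
  have hne := apply_iterate_ne hx (hper.trans_ne hne_one)
  have hP := isCycle_range_iterate hx
  have hPJ : range (f^[·] x) ⊆ J := range_subset_iff.2 fun i => hfJ.iterate i hxJ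
  obtain ⟨u, c, v, hcentral, hup⟩ :=
    hP.exists_isCentral (nontrivial_range_iterate (hper.trans_ne hne_one)) hf hJ hPJ
  have hclip := continuousOn_clip hf hcentral.isFixedPt
  have hclipJ : MapsTo (clip f c) J J := mapsTo_clip hfJ
  suffices h : HasCrossingCycle (clip f c) J c (2 * (m * l)) (k * l) from
    h.hasOverPair (by positivity) hne_one
  by_cases hside : ∀ i, f^[i] x < c ↔ f^[i] x < f (f^[i] x)
  · have hcross := hasCrossingCycle_clip hxJ (hcentral.ne ⟨0, rfl⟩) hne hside
    rw [hper, hcount] at hcross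
    exact hcross.of_sharkLt hln hl hn (by omega) hmk hclip hclipJ hJ (hcentral.mem hJ hPJ)
      (isFixedPt_clip hcentral.isFixedPt)
  · push Not at hside
    obtain ⟨i, ⟨hlt, hge⟩ | ⟨hge, hlt⟩⟩ := hside
    · exact absurd (hup _ ⟨i, rfl⟩ hlt) hge.not_gt
    · obtain ⟨y, hyJ, e, heJ, t, h⟩ := hcentral.exists_isHorseshoe hP hup ⟨i, rfl⟩
        (hge.lt_of_ne (hcentral.ne ⟨i, rfl⟩).symm) hlt hf hJ hPJ
      exact h.clip.hasCrossingCycle hclip hclipJ hJ hyJ heJ hm hmk hmk_le hl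

theorem exists_eq_mul_of_div_eq_div (hq : 0 < q) (hs : 0 < s) (h : (p : ℚ) / q = r / s) :
    ∃ m k n l, m.Coprime k ∧ p = m * n ∧ q = k * n ∧ r = m * l ∧ s = k * l := by
  obtain ⟨m, k, hmk, hp, hq'⟩ := Nat.exists_coprime p q
  have hpos : 0 < k * p.gcd q := hq' ▸ hq
  have hg : 0 < p.gcd q := Nat.pos_of_mul_pos_left hpos
  rw [div_eq_div_iff (by positivity) (by positivity)] at h
  norm_cast at h
  have hcross : m * s = k * r :=
    Nat.eq_of_mul_eq_mul_right hg (by linear_combination h - s * hp + r * hq')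
  obtain ⟨l, rfl⟩ : k ∣ s := hmk.symm.dvd_of_dvd_mul_left ⟨r, hcross⟩
  refine ⟨m, k, p.gcd q, l, hmk, hp, hq', ?_, rfl⟩
  exact Nat.eq_of_mul_eq_mul_left (Nat.pos_of_mul_pos_right hpos) (by linear_combination -hcross)

theorem orpForces_of_eq_general (hp : 0 < p) (hq : 0 < q) (hs : 0 < s)
    (heq : (p : ℚ) / q = (r : ℚ) / s) :
    q / p.gcd q ∣ q ∧ q / p.gcd q ∣ s ∧
      ((s / (q / p.gcd q) = q / (q / p.gcd q) ∨ SharkLt (s / (q / p.gcd q)) (q / (q / p.gcd q))) →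
        ∀ J : Set ℝ, J.OrdConnected → ∀ f : ℝ → ℝ, ContinuousOn f J → MapsTo f J J →
          HasOverPair f J p q → HasOverPair f J r s) := by
  obtain ⟨m, k, n, l, hmk, rfl, rfl, rfl, rfl⟩ := exists_eq_mul_of_div_eq_div hq hs heq
  have hn : 0 < n := Nat.pos_of_mul_pos_left hq
  have hk : 0 < k := Nat.pos_of_mul_pos_right hq
  have hgcd : (m * n).gcd (k * n) = n := by rw [Nat.gcd_mul_right, hmk.gcd_eq_one, one_mul]
  rw [hgcd, Nat.mul_div_cancel _ hn, Nat.mul_div_cancel_left _ hk, Nat.mul_div_cancel_left _ hk]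
  refine ⟨dvd_mul_right k n, dvd_mul_right k l, ?_⟩
  rintro (rfl | hln) J hJ f hf hfJ h
  · exact h
  · exact h.of_sharkLt hln (Nat.pos_of_mul_pos_right hp) (Nat.pos_of_mul_pos_left hs) hn hmk hf hfJ
      hJ

end OverRotation

/-- If `p/q = r/s`, with `k` the denominator of the common value in lowest terms, then `k`
divides both `q` and `s`, and if `s/k` equals `q/k` or `s/k <ₛ q/k` in the Sharkovsky
ordering, then the over-rotation pair `(p, q)` forces the pair `(r, s)`. -/
theorem orpForces_of_eq (p q r s : ℕ) (hp : 0 < p) (hq : 0 < q) (hr : 0 < r) (hs : 0 < s)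
    (hpq : 2 * p ≤ q) (hrs : 2 * r ≤ s)
    (heq : (p : ℚ) / q = (r : ℚ) / s) :
    (q / Nat.gcd p q) ∣ q ∧ (q / Nat.gcd p q) ∣ s ∧
      ((s / (q / Nat.gcd p q) = q / (q / Nat.gcd p q) ∨
          SharkLt (s / (q / Nat.gcd p q)) (q / (q / Nat.gcd p q))) →
        OrpForces p q r s) := by
  obtain ⟨hkq, hks, h⟩ := orpForces_of_eq_general hp hq hs heq
  exact ⟨hkq, hks, fun hks a b _ f => h hks (Icc a b) ordConnected_Icc f⟩
end

section
/- Let F : ℝ → ℝ be a continuous map with F(x + 1) = F(x) + 1 for all x (a lift of a continuous degree-1 circle map). Suppose there are points x_1, x_2 ∈ ℝ and positive integers q_1, q_2 and integers p_1, p_2 with F^{q_1}(x_1) = x_1 + p_1 and F^{q_2}(x_2) = x_2 + p_2. Then for every rational number r = a/b (a ∈ ℤ, b a positive integer) with p_1/q_1 ≤ r ≤ p_2/q_2 there exists a point x ∈ ℝ with F^b(x) = x + a. Consequently, the set of rotation numbers of all cycles of a continuous degree-1 circle map is either the intersection of ℚ with a closed interval, or a singleton, or empty. -/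
open Function

/-- The set of rotation numbers of all cycles of the degree-1 circle map with lift `G`. -/
def rotNumSet (G : ℝ → ℝ) : Set ℚ :=
  {ρ | ∃ (x : ℝ) (q : ℕ) (p : ℤ), 0 < q ∧ G^[q] x = x + p ∧ ρ = (p : ℚ) / q}

/-!
For each `n` the displacement `F^[n] x - x` is continuous and 1-periodic in `x`, so its range is a
compact interval. Hence the reals `t` such that, for every `n`, some point is displaced by exactly
`n * t` under `F^[n]` form a compact interval, if there are any. The rotation numbers of cycles are
precisely its rational points: along a cycle of rotation number `p / q` the displacements under
`F^[n]` average to `n * (p / q)`, which is therefore attained by the intermediate value theorem;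
conversely, if `t = a / b` then taking `n = b` gives a point displaced by exactly `a`.
-/

/-- The rotation set of the circle map with lift `F`: the reals that occur, for every `n`, as the
average displacement of some point over `n` steps. The point may depend on `n`, which makes the set
an intersection of intervals; `n = 0` imposes no condition. -/
def rotationSet (F : ℝ → ℝ) : Set ℝ :=
  ⋂ n : ℕ, (fun t : ℝ => n * t) ⁻¹' Set.range fun x => F^[n] x - x

theorem mem_rotationSet {F : ℝ → ℝ} {t : ℝ} :
    t ∈ rotationSet F ↔ ∀ n : ℕ, ∃ x, F^[n] x = x + n * t := by
  simp only [rotationSet, Set.mem_iInter, Set.mem_preimage, Set.mem_range, sub_eq_iff_eq_add']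

theorem exists_eq_add_of_iterate_eq_add {g : ℝ → ℝ} (hg : Continuous g) {q : ℕ} (hq : 0 < q)
    {x t : ℝ} (h : g^[q] x = x + q * t) : ∃ y, g y = y + t := by
  have sum_displacement : ∑ i ∈ Finset.range q, (g (g^[i] x) - g^[i] x) =
      ∑ _i ∈ Finset.range q, t := by
    simp only [← iterate_succ_apply' g, Finset.sum_range_sub (fun i => g^[i] x), h,
      iterate_zero_apply, add_sub_cancel_left, Finset.sum_const, Finset.card_range, nsmul_eq_mul]
  have hne : (Finset.range q).Nonempty := Finset.nonempty_range_iff.2 hq.ne'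
  obtain ⟨i, -, hi⟩ := Finset.exists_le_of_sum_le hne sum_displacement.le
  obtain ⟨j, -, hj⟩ := Finset.exists_le_of_sum_le hne sum_displacement.ge
  obtain ⟨y, hy⟩ := mem_range_of_exists_le_of_exists_ge (hg.sub continuous_id) ⟨_, hi⟩ ⟨_, hj⟩
  exact ⟨y, sub_eq_iff_eq_add'.1 hy⟩

theorem ordConnected_rotationSet {F : ℝ → ℝ} (hF : Continuous F) :
    (rotationSet F).OrdConnected :=
  Set.ordConnected_iInter fun n =>
    (isPreconnected_range ((hF.iterate n).sub continuous_id)).ordConnected.preimage_mono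
      (monotone_mul_left_of_nonneg n.cast_nonneg)

section Lift

open scoped AddConstMap

theorem commute_iterate_add_int {R : Type*} [AddGroupWithOne R] (f : R →+c[1, 1] R) (n : ℕ)
    (p : ℤ) : Function.Commute f^[n] (· + (p : R)) :=
  Function.Commute.iterate_left (fun x => AddConstMapClass.map_add_int f x p) n

theorem iterate_mul_eq_add_nsmul {R : Type*} [AddGroupWithOne R] (f : R →+c[1, 1] R) {q : ℕ}
    {p : ℤ} {x : R} (h : f^[q] x = x + p) (n : ℕ) : f^[q * n] x = x + n • (p : R) := by
  rw [iterate_mul, (commute_iterate_add_int f q p).iterate_eq_of_map_eq n h, add_right_iterate]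

variable {f : ℝ →+c[1, 1] ℝ}

theorem isCompact_range_iterate_sub (hf : Continuous f) (n : ℕ) :
    IsCompact (Set.range fun x => f^[n] x - x) := by
  have periodic : Periodic (fun x => f^[n] x - x) 1 := fun x => by
    simpa using congrArg (· - (x + 1)) (commute_iterate_add_int f n 1 x)
  exact periodic.compact_of_continuous one_ne_zero ((hf.iterate n).sub continuous_id)

theorem isCompact_rotationSet (hf : Continuous f) : IsCompact (rotationSet f) := by
  have closed : IsClosed (rotationSet f) := isClosed_iInter fun n =>
    (isCompact_range_iterate_sub hf n).isClosed.preimage (continuous_const_mul _)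
  refine (isCompact_range_iterate_sub hf 1).of_isClosed_subset closed fun t ht => ?_
  simpa using Set.mem_iInter.1 ht 1

theorem div_mem_rotationSet_iff (hf : Continuous f) {a : ℤ} {b : ℕ} (hb : 0 < b) :
    (a / b : ℝ) ∈ rotationSet f ↔ ∃ x, f^[b] x = x + a := by
  have hb' : (b : ℝ) ≠ 0 := Nat.cast_ne_zero.2 hb.ne'
  rw [mem_rotationSet]
  constructor
  · intro h
    simpa only [mul_div_cancel₀ _ hb'] using h b
  · rintro ⟨x, hx⟩ n
    refine exists_eq_add_of_iterate_eq_add (hf.iterate n) hb (x := x) ?_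
    rw [← iterate_mul, mul_comm n b, iterate_mul_eq_add_nsmul f hx, nsmul_eq_mul]
    field_simp

theorem rotNumSet_eq_preimage_rotationSet (hf : Continuous f) :
    rotNumSet f = (fun ρ : ℚ => (ρ : ℝ)) ⁻¹' rotationSet f := by
  ext ρ
  constructor
  · rintro ⟨x, q, p, hq, hx, rfl⟩
    simpa using (div_mem_rotationSet_iff hf hq).2 ⟨x, hx⟩
  · intro hρ
    rw [Set.mem_preimage, Rat.cast_def, div_mem_rotationSet_iff hf ρ.den_pos] at hρ
    obtain ⟨x, hx⟩ := hρ
    exact ⟨x, ρ.den, ρ.num, ρ.den_pos, hx, ρ.num_div_den.symm⟩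

theorem rotNumSet_eq_empty_or_preimage_Icc (hf : Continuous f) :
    rotNumSet f = ∅ ∨ ∃ c d : ℝ, c ≤ d ∧ rotNumSet f = (fun ρ : ℚ => (ρ : ℝ)) ⁻¹' Set.Icc c d := by
  rw [rotNumSet_eq_preimage_rotationSet hf]
  rcases (rotationSet f).eq_empty_or_nonempty with hempty | hne
  · exact Or.inl (by rw [hempty, Set.preimage_empty])
  · have hIcc := eq_Icc_of_connected_compact
      ⟨hne, (ordConnected_rotationSet hf).isPreconnected⟩ (isCompact_rotationSet hf)
    exact Or.inr ⟨_, _, Set.nonempty_Icc.1 (hIcc ▸ hne), congrArg _ hIcc⟩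

end Lift

/-- If a lift `F` of a degree-1 circle map has points with rotation numbers `p₁/q₁` and
`p₂/q₂`, then every rational `a/b` in between is also realized by a periodic orbit.
Consequently, the set of rotation numbers of all cycles of a continuous degree-1 circle
map is the intersection of `ℚ` with a closed interval, or a singleton, or empty. -/
theorem rotation_interval (F : ℝ → ℝ) (hF : Continuous F)
    (hlift : ∀ x, F (x + 1) = F x + 1)
    (x₁ x₂ : ℝ) (q₁ q₂ : ℕ) (hq₁ : 0 < q₁) (hq₂ : 0 < q₂) (p₁ p₂ : ℤ)
    (h₁ : F^[q₁] x₁ = x₁ + p₁) (h₂ : F^[q₂] x₂ = x₂ + p₂) :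
    (∀ (a : ℤ) (b : ℕ), 0 < b → (p₁ : ℚ) / q₁ ≤ (a : ℚ) / b → (a : ℚ) / b ≤ (p₂ : ℚ) / q₂ →
        ∃ x : ℝ, F^[b] x = x + a) ∧
    (∀ G : ℝ → ℝ, Continuous G → (∀ x, G (x + 1) = G x + 1) →
        (rotNumSet G = ∅ ∨ (∃ ρ₀ : ℚ, rotNumSet G = {ρ₀}) ∨
          ∃ c d : ℝ, c ≤ d ∧ rotNumSet G = {ρ : ℚ | c ≤ (ρ : ℝ) ∧ (ρ : ℝ) ≤ d})) := by
  refine ⟨fun a b hb hl hr => ?_, fun G hG hGlift => ?_⟩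
  · let f : AddConstMap ℝ ℝ 1 1 := ⟨F, hlift⟩
    have mem₁ : (p₁ / q₁ : ℝ) ∈ rotationSet f := (div_mem_rotationSet_iff hF hq₁).2 ⟨x₁, h₁⟩
    have mem₂ : (p₂ / q₂ : ℝ) ∈ rotationSet f := (div_mem_rotationSet_iff hF hq₂).2 ⟨x₂, h₂⟩
    have mem_between : (a / b : ℝ) ∈ rotationSet f :=
      (ordConnected_rotationSet hF).out mem₁ mem₂ ⟨by exact_mod_cast hl, by exact_mod_cast hr⟩
    exact (div_mem_rotationSet_iff hF hb).1 mem_between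
  · exact (rotNumSet_eq_empty_or_preimage_Icc (f := ⟨G, hGlift⟩) hG).imp_right Or.inr
end

section
/- Let F : ℝ → ℝ be a continuous map with F(x + 1) = F(x) + 1 for all x (a lift of a continuous degree-1 circle map f of ℝ/ℤ). Suppose there are points x_1, x_2 ∈ ℝ and positive integers q_1, q_2 and integers p_1, p_2 with F^{q_1}(x_1) = x_1 + p_1 and F^{q_2}(x_2) = x_2 + p_2. Then for every integer p and every positive integer q (the fraction p/q not necessarily in reduced form) with p_1/q_1 < p/q < p_2/q_2, there exists a point x ∈ ℝ with F^q(x) = x + p whose projection to the circle ℝ/ℤ is a periodic point of f of minimal period exactly q. In particular, every denominator of a fraction lying in the interior of the rotation interval is a period of a cycle of f. -/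
open Function

/-!
Write `p / q = m / n` in lowest terms with `q = g * n`, and let `G` be the lift `F^[n] - m` of the
`n`-th iterate of the circle map. Since `G` has an orbit unbounded above and an orbit unbounded
below, no half-line is invariant under `G`. If `t` maximizes `G` on `(-∞, s]` and `s` minimizes `G`
on `[t, ∞)`, it follows that `[t, s]` and `[s, G t]` both cover `[t, G t]` under `G`. This horseshoe
contains points of every minimal period under `G`, and a point of minimal period `g` under `G`
projects to a point of minimal period `g * n` on the circle, because its rotation number `m / n`
forces `n` to divide every period.
-/

section Horseshoe

open Set

variable {α δ : Type*} [ConditionallyCompleteLinearOrder α] [DenselyOrdered α] [TopologicalSpace α]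
  [OrderTopology α] [LinearOrder δ] [TopologicalSpace δ] [OrderClosedTopology δ]

lemma exists_image_Icc_eq_of_le_of_le {f : α → δ} {u v : α} (huv : u ≤ v)
    (hf : ContinuousOn f (Icc u v)) (hfuv : f u ≤ f v) :
    ∃ K : NonemptyInterval α, (K : Set α) ⊆ Icc u v ∧ f '' K = Icc (f u) (f v) := by
  -- `b` is the first point with value `f v`, and `a` the last point before `b` with value `f u`
  obtain ⟨b, ⟨hb, hfb : f b = f v⟩, hb_least⟩ :=
    (isCompact_Icc.of_isClosed_subset (hf.preimage_isClosed_of_isClosed isClosed_Icc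
      (isClosed_singleton (x := f v))) inter_subset_left).exists_isLeast
      ⟨v, right_mem_Icc.2 huv, rfl⟩
  have hfub : ContinuousOn f (Icc u b) := hf.mono (Icc_subset_Icc_right hb.2)
  obtain ⟨a, ⟨ha, hfa : f a = f u⟩, ha_greatest⟩ :=
    (isCompact_Icc.of_isClosed_subset (hfub.preimage_isClosed_of_isClosed isClosed_Icc
      (isClosed_singleton (x := f u))) inter_subset_left).exists_isGreatest
      ⟨u, left_mem_Icc.2 hb.1, rfl⟩
  refine ⟨⟨(a, b), ha.2⟩, Icc_subset_Icc ha.1 hb.2, Subset.antisymm ?_ ?_⟩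
  · rintro _ ⟨x, ⟨hax : a ≤ x, hxb : x ≤ b⟩, rfl⟩
    have hux : u ≤ x := ha.1.trans hax
    constructor
    · by_contra! hlt
      obtain ⟨w, hw, hfw⟩ := intermediate_value_Icc hxb
        (hfub.mono (Icc_subset_Icc_left hux)) ⟨hlt.le, hfuv.trans_eq hfb.symm⟩
      have hwa : w ≤ a := ha_greatest ⟨⟨hux.trans hw.1, hw.2⟩, hfw⟩
      rw [← hfa, le_antisymm hax (hw.1.trans hwa)] at hlt
      exact hlt.false
    · by_contra! hlt
      obtain ⟨w, hw, hfw⟩ := intermediate_value_Icc hux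
        (hfub.mono (Icc_subset_Icc_right hxb)) ⟨hfuv, hlt.le⟩
      have hbw : b ≤ w := hb_least ⟨⟨hw.1, hw.2.trans (hxb.trans hb.2)⟩, hfw⟩
      rw [← hfb, le_antisymm hxb (hbw.trans hw.2)] at hlt
      exact hlt.false
  · have := intermediate_value_Icc ha.2 (hfub.mono (Icc_subset_Icc_left ha.1))
    rwa [hfa, hfb] at this

lemma exists_le_image_eq_of_surjOn {f : α → δ} {I : NonemptyInterval α} {J : NonemptyInterval δ}
    (hf : ContinuousOn f I) (hIJ : SurjOn f I J) : ∃ K ≤ I, f '' K = J := by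
  obtain ⟨u, hu, hfu⟩ := hIJ (left_mem_Icc.2 J.fst_le_snd)
  obtain ⟨v, hv, hfv⟩ := hIJ (right_mem_Icc.2 J.fst_le_snd)
  rcases le_total u v with huv | hvu
  · have hsub : Icc u v ⊆ (I : Set α) := Icc_subset_Icc hu.1 hv.2
    obtain ⟨K, hK, hfK⟩ := exists_image_Icc_eq_of_le_of_le huv (hf.mono hsub)
      (hfu.trans_le (J.fst_le_snd.trans_eq hfv.symm))
    exact ⟨K, NonemptyInterval.coe_subset_coe.1 (hK.trans hsub), by rw [hfK, hfu, hfv]; rfl⟩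
  · have hsub : Icc v u ⊆ (I : Set α) := Icc_subset_Icc hv.1 hu.2
    obtain ⟨K, hK, hfK⟩ := exists_image_Icc_eq_of_le_of_le (f := OrderDual.toDual ∘ f) hvu
      (hf.mono hsub) (hfu.trans_le (J.fst_le_snd.trans_eq hfv.symm))
    refine ⟨K, NonemptyInterval.coe_subset_coe.1 (hK.trans hsub), ?_⟩
    rw [comp_apply, comp_apply, hfu, hfv, Icc_toDual] at hfK
    exact hfK

lemma exists_image_iterate_eq_of_surjOn {f : α → α} (hf : Continuous f) {n : ℕ}
    {I : ℕ → NonemptyInterval α} (hI : ∀ i < n, SurjOn f (I i) (I (i + 1))) :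
    ∃ K : NonemptyInterval α, f^[n] '' K = I n ∧ ∀ i ≤ n, MapsTo f^[i] K (I i) := by
  induction n generalizing I with
  | zero =>
    refine ⟨I 0, by simp, fun i hi ↦ ?_⟩
    rw [Nat.le_zero.1 hi]
    exact mapsTo_id _
  | succ n ih =>
    obtain ⟨L, hL, hLI⟩ := ih (I := fun i ↦ I (i + 1)) fun i hi ↦ hI (i + 1) (by lia)
    obtain ⟨K, hKI, hfK⟩ := exists_le_image_eq_of_surjOn hf.continuousOn
      ((hI 0 n.succ_pos).mono Subset.rfl (hLI 0 n.zero_le))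
    refine ⟨K, by rw [iterate_succ, image_comp, hfK, hL], fun i hi ↦ ?_⟩
    cases i with
    | zero => exact NonemptyInterval.coe_subset_coe.2 hKI
    | succ i => exact (hLI i (by lia)).comp (mapsTo_iff_image_subset.2 hfK.subset)

lemma exists_isPeriodicPt_of_surjOn {f : α → α} (hf : Continuous f) {n : ℕ}
    {I : ℕ → NonemptyInterval α} (hI : ∀ i < n, SurjOn f (I i) (I (i + 1))) (hn : I n = I 0) :
    ∃ x, IsPeriodicPt f n x ∧ ∀ i ≤ n, f^[i] x ∈ I i := by
  obtain ⟨K, hK, hKI⟩ := exists_image_iterate_eq_of_surjOn hf hI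
  have hsurj : SurjOn f^[n] K K := fun x hx ↦ by
    rw [hK, hn]
    exact hKI 0 n.zero_le hx
  obtain ⟨x, hx, hfx⟩ := exists_mem_Icc_isFixedPt_of_surjOn (hf.iterate n).continuousOn
    K.fst_le_snd hsurj
  exact ⟨x, hfx, fun i hi ↦ hKI i hi hx⟩

/-- A *horseshoe* of `f`: two intervals each of which covers both under `f`. Instead of disjointness
we ask that no common point be mapped into the second interval, which suffices for reading off
minimal periods from itineraries and allows a shared endpoint. -/
structure IsHorseshoe_s13 {β : Type*} [PartialOrder β] (f : β → β) (I J : NonemptyInterval β) :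
    Prop where
  surjOn_left_left : SurjOn f I I
  surjOn_left_right : SurjOn f I J
  surjOn_right_left : SurjOn f J I
  surjOn_right_right : SurjOn f J J
  map_notMem : ∀ x ∈ I, x ∈ J → f x ∉ J

lemma IsHorseshoe_s13.exists_minimalPeriod_eq {f : α → α} {I J : NonemptyInterval α}
    (h : IsHorseshoe_s13 f I J) (hf : Continuous f) {d : ℕ} (hd : 0 < d) :
    ∃ x, minimalPeriod f x = d := by
  -- the itinerary `I → J → ⋯ → J → I` of length `d`
  obtain ⟨x, hx, hxI⟩ := exists_isPeriodicPt_of_surjOn (n := d) hf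
    (I := fun i ↦ if d ∣ i then I else J)
    (fun i _ ↦ by
      split_ifs
      exacts [h.surjOn_left_left, h.surjOn_left_right, h.surjOn_right_left, h.surjOn_right_right])
    (by simp)
  have hxJ : ∀ i, 0 < i → i < d → f^[i] x ∈ J := fun i hi hid ↦ by
    simpa only [if_neg (Nat.not_dvd_of_pos_of_lt hi hid)] using hxI i hid.le
  refine ⟨x, (hx.minimalPeriod_le hd).eq_of_not_lt fun hlt ↦ ?_⟩
  have hpos : 0 < minimalPeriod f x := hx.minimalPeriod_pos hd
  refine h.map_notMem x (by simpa using hxI 0 d.zero_le) ?_ (hxJ 1 one_pos (by lia))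
  simpa only [iterate_minimalPeriod] using hxJ _ hpos hlt

end Horseshoe

lemma exists_eq_mul_isCoprime {q : ℕ} (hq : 0 < q) (p : ℤ) :
    ∃ (g n : ℕ) (m : ℤ), 0 < g ∧ 0 < n ∧ IsCoprime (n : ℤ) m ∧ q = n * g ∧ p = g * m := by
  obtain ⟨g, n, m, hg, hnm, hqn, hpm⟩ :=
    Int.exists_gcd_one' (Int.gcd_pos_of_ne_zero_left p (by lia : (q : ℤ) ≠ 0))
  have hn : 0 < n := pos_of_mul_pos_left (hqn ▸ by exact_mod_cast hq) (Int.natCast_nonneg g)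
  lift n to ℕ using hn.le
  exact ⟨g, n, m, hg, by exact_mod_cast hn, Int.isCoprime_iff_gcd_eq_one.2 hnm,
    by exact_mod_cast hqn, by rw [hpm, mul_comm]⟩

section DegreeOne

open Set Filter AddConstMap AddConstMapClass

variable {F G : ℝ →+c[1, 1] ℝ} {x : ℝ}

lemma exists_le_lt_map_of_not_bddAbove (hx : ¬BddAbove (range fun k ↦ G^[k] x)) (c : ℝ) :
    ∃ y ≤ c, c < G y := by
  by_contra! hc
  refine hx ⟨c + ⌈x - c⌉, forall_mem_range.2 fun k ↦ ?_⟩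
  have hle : (G ^ k) (x - ⌈x - c⌉) ≤ c :=
    MapsTo.iterate (s := Iic c) hc k (sub_le_comm.1 (Int.le_ceil (x - c)))
  rw [map_sub_int] at hle
  exact sub_le_iff_le_add.1 hle

lemma exists_ge_map_lt_of_not_bddBelow (hx : ¬BddBelow (range fun k ↦ G^[k] x)) (c : ℝ) :
    ∃ y ≥ c, G y < c := by
  by_contra! hc
  refine hx ⟨c - ⌈c - x⌉, forall_mem_range.2 fun k ↦ ?_⟩
  have hge : c ≤ (G ^ k) (x + ⌈c - x⌉) :=
    MapsTo.iterate (s := Ici c) hc k (sub_le_iff_le_add'.1 (Int.le_ceil (c - x)))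
  rw [map_add_int] at hge
  exact sub_le_iff_le_add.2 hge

lemma exists_isMinOn_Ici (hG : Continuous G) (c : ℝ) : ∃ s ≥ c, IsMinOn G (Ici c) s := by
  obtain ⟨s, hs, hmin⟩ := isCompact_Icc.exists_isMinOn
    (nonempty_Icc.2 (le_add_of_nonneg_right zero_le_one : c ≤ c + 1)) hG.continuousOn
  refine ⟨s, hs.1, fun x (hx : c ≤ x) ↦ ?_⟩
  have hfloor : (0 : ℝ) ≤ ⌊x - c⌋ := by exact_mod_cast Int.floor_nonneg.2 (sub_nonneg.2 hx)
  have hle : G s ≤ G (x - ⌊x - c⌋) := hmin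
    ⟨by linarith [Int.floor_le (x - c)], by linarith [Int.lt_floor_add_one (x - c)]⟩
  rw [map_sub_int] at hle
  exact hle.trans (sub_le_self _ hfloor)

lemma exists_isMaxOn_Iic (hG : Continuous G) (c : ℝ) : ∃ t ≤ c, IsMaxOn G (Iic c) t := by
  have hcont : Continuous (conjNeg G) := (hG.comp continuous_neg).neg
  obtain ⟨s, hs, hmin⟩ := exists_isMinOn_Ici hcont (-c)
  refine ⟨-s, neg_le.1 hs, fun x (hx : x ≤ c) ↦ ?_⟩
  have hle : -G (-s) ≤ -G (- -x) := hmin (neg_le_neg hx)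
  rw [neg_neg] at hle
  exact neg_le_neg_iff.1 hle

lemma exists_isMaxOn_Iic_isMinOn_Ici (hG : Continuous G) :
    ∃ t s, t ≤ s ∧ IsMaxOn G (Iic s) t ∧ IsMinOn G (Ici t) s := by
  obtain ⟨r, hr, hr_min⟩ := exists_isMinOn_Ici hG 0
  obtain ⟨t, htr, ht⟩ := exists_isMaxOn_Iic hG r
  obtain ⟨s, hs, hs_min⟩ := isCompact_Icc.exists_isMinOn (nonempty_Icc.2 htr) hG.continuousOn
  refine ⟨t, s, hs.1, ht.on_subset (Iic_subset_Iic.2 hs.2), fun x (hx : t ≤ x) ↦ ?_⟩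
  rcases le_total x r with hxr | hrx
  · exact hs_min ⟨hx, hxr⟩
  · exact (isMinOn_iff.1 hs_min r ⟨htr, le_rfl⟩).trans (isMinOn_iff.1 hr_min x (hr.trans hrx))

lemma exists_isHorseshoe (hG : Continuous G) {x₁ x₂ : ℝ}
    (h₁ : ¬BddBelow (range fun k ↦ G^[k] x₁)) (h₂ : ¬BddAbove (range fun k ↦ G^[k] x₂)) :
    ∃ I J, IsHorseshoe_s13 G I J := by
  obtain ⟨t, s, hts, ht, hs⟩ := exists_isMaxOn_Iic_isMinOn_Ici hG
  have hGs : G s < t := by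
    obtain ⟨y, hy, hGy⟩ := exists_ge_map_lt_of_not_bddBelow h₁ t
    exact (hs hy).trans_lt hGy
  obtain ⟨y, hy, hGy⟩ := exists_le_lt_map_of_not_bddAbove h₂ (G t)
  have hsy : s < y := lt_of_not_ge fun hys ↦ (ht hys).not_gt hGy
  have hsGt : s ≤ G t := hsy.le.trans hy
  have hI : SurjOn G (Icc t s) (Icc t (G t)) :=
    (Icc_subset_Icc_left hGs.le).trans (intermediate_value_Icc' hts hG.continuousOn)
  have hJ : SurjOn G (Icc s (G t)) (Icc t (G t)) :=
    (Icc_subset_Icc hGs.le hGy.le).trans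
      (hG.continuousOn.surjOn_Icc (left_mem_Icc.2 hsGt) ⟨hsy.le, hy⟩)
  have hI_sub : Icc t s ⊆ Icc t (G t) := Icc_subset_Icc_right hsGt
  have hJ_sub : Icc s (G t) ⊆ Icc t (G t) := Icc_subset_Icc_left hts
  refine ⟨⟨(t, s), hts⟩, ⟨(s, G t), hsGt⟩, hI.mono .rfl hI_sub, hI.mono .rfl hJ_sub,
    hJ.mono .rfl hI_sub, hJ.mono .rfl hJ_sub, ?_⟩
  intro x ⟨_, (hxs : x ≤ s)⟩ ⟨(hsx : s ≤ x), _⟩ ⟨(hsGx : s ≤ G x), _⟩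
  rw [le_antisymm hxs hsx] at hsGx
  exact (hts.trans hsGx).not_gt hGs

/-- The lift `F^[n] - m` of the `n`-th iterate of the circle map with lift `F`. Its fixed points are
the points `x` with `F^[n] x = x + m`. -/
noncomputable def iterateSub (F : ℝ →+c[1, 1] ℝ) (n : ℕ) (m : ℤ) : ℝ →+c[1, 1] ℝ :=
  (-m : ℝ) +ᵥ F ^ n

lemma iterateSub_apply (F : ℝ →+c[1, 1] ℝ) (n : ℕ) (m : ℤ) (x : ℝ) :
    iterateSub F n m x = F^[n] x - m :=
  neg_add_eq_sub _ _

lemma continuous_iterateSub (hF : Continuous F) (n : ℕ) (m : ℤ) : Continuous (iterateSub F n m) :=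
  (hF.iterate n).const_vadd (-m : ℝ)

lemma isFixedPt_iterateSub {n : ℕ} {m : ℤ} :
    IsFixedPt (iterateSub F n m) x ↔ F^[n] x = x + m := by
  rw [IsFixedPt, iterateSub_apply, sub_eq_iff_eq_add]

lemma iterate_iterateSub (F : ℝ →+c[1, 1] ℝ) (n : ℕ) (m : ℤ) (k : ℕ) :
    (iterateSub F n m)^[k] = iterateSub F (n * k) (k * m) := by
  have hcomm : Function.Commute ((-m : ℝ) + ·) F^[n] := fun x ↦ by
    simpa only [neg_add_eq_sub, AddConstMap.pow_apply] using (map_sub_int (F ^ n) x m).symm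
  ext x
  calc (iterateSub F n m)^[k] x = (((-m : ℝ) + ·) ∘ F^[n])^[k] x := rfl
    _ = k • (-m : ℝ) + F^[n * k] x := by
      rw [hcomm.comp_iterate, comp_apply, add_left_iterate, iterate_mul]
    _ = iterateSub F (n * k) (k * m) x := by
      rw [iterateSub_apply]; push_cast; ring

lemma iterate_mul_of_isFixedPt_iterateSub {n : ℕ} {m : ℤ} (h : IsFixedPt (iterateSub F n m) x)
    (k : ℕ) : F^[n * k] x = x + k * m := by
  have := h.iterate k
  rw [iterate_iterateSub, isFixedPt_iterateSub] at this
  exact_mod_cast this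

lemma mul_eq_mul_of_isFixedPt_iterateSub {n j : ℕ} {m k : ℤ} (hm : IsFixedPt (iterateSub F n m) x)
    (hk : IsFixedPt (iterateSub F j k) x) : j * m = n * k := by
  have := iterate_mul_of_isFixedPt_iterateSub hm j
  rw [mul_comm, iterate_mul_of_isFixedPt_iterateSub hk n] at this
  exact_mod_cast (add_left_cancel this).symm

lemma mul_minimalPeriod_iterateSub_dvd {n j : ℕ} {m k : ℤ} (hn : 0 < n) (hnm : IsCoprime (n : ℤ) m)
    (hx : x ∈ periodicPts (iterateSub F n m)) (hk : IsFixedPt (iterateSub F j k) x) :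
    n * minimalPeriod (iterateSub F n m) x ∣ j := by
  set g := minimalPeriod (iterateSub F n m) x
  have hg_pos : (0 : ℤ) < g := by exact_mod_cast minimalPeriod_pos_of_mem_periodicPts hx
  have hfix : IsFixedPt (iterateSub F (n * g) (g * m)) x := by
    rw [← iterate_iterateSub]
    exact isPeriodicPt_minimalPeriod _ x
  have hrot : j * m = n * k := by
    have := mul_eq_mul_of_isFixedPt_iterateSub hfix hk
    push_cast at this
    exact mul_left_cancel₀ hg_pos.ne' (by linear_combination this)
  obtain ⟨l, rfl⟩ : n ∣ j := by
    exact_mod_cast hnm.dvd_of_dvd_mul_right (Dvd.intro k hrot.symm)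
  have hkl : k = l * m := by
    push_cast at hrot
    exact mul_left_cancel₀ (by exact_mod_cast hn.ne' : (n : ℤ) ≠ 0) (by linear_combination -hrot)
  rw [hkl, ← iterate_iterateSub] at hk
  exact mul_dvd_mul_left n (IsPeriodicPt.minimalPeriod_dvd hk)

lemma range_iterate_iterateSub_mul_subset (F : ℝ →+c[1, 1] ℝ) (n g : ℕ) (m : ℤ) (x : ℝ) :
    (range fun k ↦ (iterateSub F (n * g) (g * m))^[k] x) ⊆
      range fun k ↦ (iterateSub F n m)^[k] x := by
  rintro _ ⟨k, rfl⟩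
  exact ⟨g * k, by simp only [← iterate_iterateSub, iterate_mul]⟩

lemma iterate_iterateSub_of_iterate_eq {r : ℕ} {s : ℤ} (hx : F^[r] x = x + s) (q : ℕ) (p : ℤ)
    (k : ℕ) : (iterateSub F q p)^[r * k] x = x + k * ((s * q - p * r : ℤ) : ℝ) := by
  have hfix := iterate_mul_of_isFixedPt_iterateSub (isFixedPt_iterateSub.2 hx) (q * k)
  rw [iterate_iterateSub, iterateSub_apply, mul_left_comm, hfix]
  push_cast
  ring

lemma not_bddBelow_of_div_lt_div {r q : ℕ} {s p : ℤ} (hr : 0 < r) (hq : 0 < q)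
    (hx : F^[r] x = x + s) (h : (s : ℚ) / r < p / q) :
    ¬BddBelow (range fun k ↦ (iterateSub F q p)^[k] x) := by
  rw [div_lt_div_iff₀ (by exact_mod_cast hr) (by exact_mod_cast hq)] at h
  have hneg : ((s * q - p * r : ℤ) : ℝ) < 0 := by exact_mod_cast sub_neg.2 (by exact_mod_cast h)
  have htendsto : Tendsto (fun k ↦ (iterateSub F q p)^[r * k] x) atTop atBot := by
    simp only [iterate_iterateSub_of_iterate_eq hx]
    exact tendsto_atBot_add_const_left _ _ (tendsto_natCast_atTop_atTop.atTop_mul_const_of_neg hneg)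
  exact fun hbdd ↦ not_bddBelow_of_tendsto_atBot htendsto
    (hbdd.mono (range_comp_subset_range (r * ·) fun k ↦ (iterateSub F q p)^[k] x))

lemma not_bddAbove_of_div_lt_div {r q : ℕ} {s p : ℤ} (hr : 0 < r) (hq : 0 < q)
    (hx : F^[r] x = x + s) (h : (p : ℚ) / q < s / r) :
    ¬BddAbove (range fun k ↦ (iterateSub F q p)^[k] x) := by
  rw [div_lt_div_iff₀ (by exact_mod_cast hq) (by exact_mod_cast hr)] at h
  have hpos : (0 : ℝ) < (s * q - p * r : ℤ) := by exact_mod_cast sub_pos.2 (by exact_mod_cast h)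
  have htendsto : Tendsto (fun k ↦ (iterateSub F q p)^[r * k] x) atTop atTop := by
    simp only [iterate_iterateSub_of_iterate_eq hx]
    exact tendsto_atTop_add_const_left _ _ (tendsto_natCast_atTop_atTop.atTop_mul_const hpos)
  exact fun hbdd ↦ not_bddAbove_of_tendsto_atTop htendsto
    (hbdd.mono (range_comp_subset_range (r * ·) fun k ↦ (iterateSub F q p)^[k] x))

theorem rotation_interval_interior_periods_general (hF : Continuous F) {p : ℤ} {q : ℕ} (hq : 0 < q)
    {x₁ x₂ : ℝ} (h₁ : ¬BddBelow (range fun k ↦ (iterateSub F q p)^[k] x₁))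
    (h₂ : ¬BddAbove (range fun k ↦ (iterateSub F q p)^[k] x₂)) :
    ∃ x : ℝ, F^[q] x = x + p ∧ ∀ j : ℕ, 0 < j → j < q → ∀ m : ℤ, F^[j] x ≠ x + m := by
  obtain ⟨g, n, m, hg, hn, hnm, rfl, rfl⟩ := exists_eq_mul_isCoprime hq p
  obtain ⟨I, J, hIJ⟩ := exists_isHorseshoe (continuous_iterateSub hF n m)
    (fun h ↦ h₁ (h.mono (range_iterate_iterateSub_mul_subset F n g m x₁)))
    (fun h ↦ h₂ (h.mono (range_iterate_iterateSub_mul_subset F n g m x₂)))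
  obtain ⟨x, rfl⟩ := hIJ.exists_minimalPeriod_eq (continuous_iterateSub hF n m) hg
  refine ⟨x, ?_, fun j hj hjq k hk ↦ ?_⟩
  · rw [← isFixedPt_iterateSub, ← iterate_iterateSub]
    exact isPeriodicPt_minimalPeriod _ x
  · have hdvd := mul_minimalPeriod_iterateSub_dvd hn hnm
      (minimalPeriod_pos_iff_mem_periodicPts.1 hg) (isFixedPt_iterateSub.2 hk)
    exact Nat.not_dvd_of_pos_of_lt hj hjq hdvd

end DegreeOne

/-- If a lift `F` of a continuous degree-1 circle map `f` has points with rotation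
numbers `p₁/q₁` and `p₂/q₂`, then for every fraction `p/q` (not necessarily reduced)
strictly in between, there is a point `x` with `F^[q] x = x + p` projecting to a periodic
point of `f` of minimal period exactly `q`. -/
theorem rotation_interval_interior_periods (F : ℝ → ℝ) (hF : Continuous F)
    (hlift : ∀ x, F (x + 1) = F x + 1)
    (x₁ x₂ : ℝ) (q₁ q₂ : ℕ) (hq₁ : 0 < q₁) (hq₂ : 0 < q₂) (p₁ p₂ : ℤ)
    (h₁ : F^[q₁] x₁ = x₁ + p₁) (h₂ : F^[q₂] x₂ = x₂ + p₂) :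
    ∀ (p : ℤ) (q : ℕ), 0 < q → (p₁ : ℚ) / q₁ < (p : ℚ) / q → (p : ℚ) / q < (p₂ : ℚ) / q₂ →
      ∃ x : ℝ, F^[q] x = x + p ∧
        ∀ j : ℕ, 0 < j → j < q → ∀ m : ℤ, F^[j] x ≠ x + m :=
  fun _ _ hq hlo hhi ↦ rotation_interval_interior_periods_general (F := ⟨F, hlift⟩) hF hq
    (not_bddBelow_of_div_lt_div hq₁ hq h₁ hlo) (not_bddAbove_of_div_lt_div hq₂ hq h₂ hhi)
end
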